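/- Let k ≥ 2 be an integer and j ∈ {1,…,k−1}. With high probability, for all p ≥ p_{M_j} simultaneously, the complex G_p is F_2-cohomologically j-connected, i.e. H^0(G_p;F_2) ≅ F_2 and H^i(G_p;F_2) = 0 for all i ∈ {1,…,j}. -/

import Mathlib

open MeasureTheory Filter

attribute [local instance] Classical.propDecidable

namespace RSC

variable {V : Type*}

/-- `A` is an `i`-dimensional simplex of the complex `G`. -/
def IsSimplex (G : Set (Finset V)) (i : ℕ) (A : Finset V) : Prop :=
  A ∈ G ∧ A.card = i + 1

/-- A `k`-dimensional simplicial complex on vertex set `V`. -/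
structure IsKComplex (G : Set (Finset V)) (k : ℕ) : Prop where
  down : ∀ A ∈ G, ∀ B, B ⊆ A → B.Nonempty → B ∈ G
  singletons : ∀ v : V, ({v} : Finset V) ∈ G
  dim : ∀ A ∈ G, A.card ≤ k + 1

/-- `i`-cochains with `F₂`-coefficients. -/
abbrev Cochain (G : Set (Finset V)) (i : ℕ) : Type _ :=
  {A : Finset V // IsSimplex G i A} → ZMod 2

/-- The coboundary map `δ^i : C^i(G) → C^{i+1}(G)`. -/
noncomputable def coboundary (G : Set (Finset V)) (i : ℕ) :
    Cochain G i →ₗ[ZMod 2] Cochain G (i + 1) where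
  toFun f := fun σ => ∑ τ ∈ Finset.powersetCard (i + 1) (σ : Finset V),
      if h : IsSimplex G i τ then f ⟨τ, h⟩ else 0
  map_add' f g := by
    funext σ
    simp only [Pi.add_apply, ← Finset.sum_add_distrib]
    refine Finset.sum_congr rfl fun τ _ => ?_
    by_cases h : IsSimplex G i τ <;> simp [h]
  map_smul' c f := by
    funext σ
    simp only [Pi.smul_apply, RingHom.id_apply, Finset.smul_sum]
    refine Finset.sum_congr rfl fun τ _ => ?_
    by_cases h : IsSimplex G i τ <;> simp [h]

/-- The submodule of `i`-cocycles. -/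
noncomputable def cocycles (G : Set (Finset V)) (i : ℕ) : Submodule (ZMod 2) (Cochain G i) :=
  LinearMap.ker (coboundary G i)

/-- The submodule of `i`-coboundaries (`δ^{-1}` is the zero map). -/
noncomputable def coboundaries (G : Set (Finset V)) : (i : ℕ) → Submodule (ZMod 2) (Cochain G i)
  | 0 => ⊥
  | (i + 1) => LinearMap.range (coboundary G i)

/-- The `i`-th cohomology group `H^i(G;F₂) = ker δ^i / im δ^{i-1}`. -/
noncomputable abbrev cohomology (G : Set (Finset V)) (i : ℕ) :=
  (cocycles G i) ⧸ ((coboundaries G i).comap (cocycles G i).subtype)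

/-- `F₂`-cohomological `j`-connectedness: `H^0 ≅ F₂` and `H^i = 0` for `1 ≤ i ≤ j`. -/
def CohomConnected (G : Set (Finset V)) (j : ℕ) : Prop :=
  Nonempty (cohomology G 0 ≃ₗ[ZMod 2] ZMod 2) ∧
    ∀ i, 1 ≤ i → i ≤ j → Subsingleton (cohomology G i)

/-- The `j`-flower in `K` with centre `C`: the set of petals `C ∪ {w}`, `w ∈ K \ C`. -/
def Flower [DecidableEq V] (K C : Finset V) : Set (Finset V) :=
  {P | ∃ w ∈ K \ C, P = insert w C}

/-- A copy of `M_j^-`: a `k`-simplex `K` together with a `(j-1)`-simplex `C ⊆ K` such that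
each petal of the flower `F(K,C)` is contained in no `k`-simplex other than `K`. -/
def IsMjMinus [DecidableEq V] (G : Set (Finset V)) (k j : ℕ) (K C : Finset V) : Prop :=
  IsSimplex G k K ∧ C ∈ G ∧ C.card = j ∧ C ⊆ K ∧
    ∀ P ∈ Flower K C, ∀ K', IsSimplex G k K' → P ⊆ K' → K' = K

/-- A `j`-cycle: every `(j-1)`-simplex lies in an even number of members of `J`. -/
def IsCycle (G : Set (Finset V)) (j : ℕ) (J : Finset (Finset V)) : Prop :=
  (∀ σ ∈ J, IsSimplex G j σ) ∧
    ∀ τ : Finset V, τ.card = j → Even (J.filter (fun σ => τ ⊆ σ)).card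

/-- A copy of `M_j`. -/
def IsMj [DecidableEq V] (G : Set (Finset V)) (k j : ℕ) (K C : Finset V)
    (J : Finset (Finset V)) : Prop :=
  IsMjMinus G k j K C ∧ IsCycle G j J ∧ ∃! P : Finset V, P ∈ J ∧ P ∈ Flower K C

/-- A `j`-shell: a `(j+2)`-set all of whose `(j+1)`-subsets are `j`-simplices. -/
def IsShell (G : Set (Finset V)) (j : ℕ) (A : Finset V) : Prop :=
  A.card = j + 2 ∧ ∀ τ ⊆ A, τ.card = j + 1 → τ ∈ G

/-- A copy of `M_j^*`. -/
def IsMjStar [DecidableEq V] (G : Set (Finset V)) (k j : ℕ) (K C : Finset V) (w a : V) : Prop :=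
  IsMjMinus G k j K C ∧ w ∈ K \ C ∧ a ∉ K ∧ IsShell G j (insert a (insert w C))

/-- The support of a cochain. -/
def cochainSupport {G : Set (Finset V)} {i : ℕ} (f : Cochain G i) : Set (Finset V) :=
  {A | ∃ h : IsSimplex G i A, f ⟨A, h⟩ = 1}

/-- A cochain arising from a copy of `M_j^-`: its support is the flower `F(K,C)`. -/
def ArisesFrom [DecidableEq V] (G : Set (Finset V)) (k j : ℕ) (f : Cochain G j)
    (K C : Finset V) : Prop :=
  IsMjMinus G k j K C ∧ cochainSupport f = Flower K C

/-- A `j`-cocycle generated by copies of `M_j^-`: it differs by a `j`-coboundary from a sum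
of `j`-cocycles arising from copies of `M_j^-`. -/
def GeneratedByMjMinus [DecidableEq V] (G : Set (Finset V)) (k j : ℕ) (f : Cochain G j) : Prop :=
  ∃ (m : ℕ) (fs : Fin m → Cochain G j),
    (∀ i, ∃ K C, ArisesFrom G k j (fs i) K C) ∧
      f - (∑ i, fs i) ∈ coboundaries G j

/-- Membership in `N_G`: a `j`-cocycle not generated by copies of `M_j^-`. -/
def InNG [DecidableEq V] (G : Set (Finset V)) (k j : ℕ) (f : Cochain G j) : Prop :=
  f ∈ cocycles G j ∧ ¬ GeneratedByMjMinus G k j f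

/-- Traversability: the transitive closure of "lying in a common `k`-simplex" is `S × S`. -/
def Traversable (G : Set (Finset V)) (k : ℕ) (S : Set (Finset V)) : Prop :=
  ∀ σ₁ ∈ S, ∀ σ₂ ∈ S,
    Relation.TransGen
      (fun a b => a ∈ S ∧ b ∈ S ∧ ∃ K, IsSimplex G k K ∧ a ⊆ K ∧ b ⊆ K) σ₁ σ₂

/-- A local obstacle: a `k`-simplex containing at least `k-j+1` many `j`-simplices,
each lying in no other `k`-simplex. -/
def IsLocalObstacle (G : Set (Finset V)) (k j : ℕ) (K : Finset V) : Prop :=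
  IsSimplex G k K ∧
    k - j + 1 ≤ {σ : Finset V | IsSimplex G j σ ∧ σ ⊆ K ∧
      ∀ K', IsSimplex G k K' → σ ⊆ K' → K' = K}.ncard

/-- The random complex `G_p` given birth times `t`: all singletons together with all
non-empty subsets of `(k+1)`-sets with birth time at most `p`. -/
def complexAt (k n : ℕ) (t : Finset (Fin n) → ℝ) (p : ℝ) : Set (Finset (Fin n)) :=
  {A | (∃ v, A = {v}) ∨
    (A.Nonempty ∧ ∃ K : Finset (Fin n), K.card = k + 1 ∧ t K ≤ p ∧ A ⊆ K)}

/-- The distribution of birth times: i.i.d. uniform on `[0,1]`. -/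
noncomputable def birthMeasure (n : ℕ) : Measure (Finset (Fin n) → ℝ) :=
  Measure.pi fun _ => volume.restrict (Set.Icc (0 : ℝ) 1)

/-- `p_{M_j}`: the supremum of the probabilities `p ∈ [0,1]` at which `G_p` contains
a copy of `M_j`. -/
noncomputable def pMj (k j n : ℕ) (t : Finset (Fin n) → ℝ) : ℝ :=
  sSup {p : ℝ | p ∈ Set.Icc (0 : ℝ) 1 ∧
    ∃ K C J, IsMj (complexAt k n t p) k j K C J}

/-- The threshold `p_j`. -/
noncomputable def pjThreshold (k j n : ℕ) : ℝ :=
  ((j + 1 : ℝ) * Real.log n + Real.log (Real.log n)) * (Nat.factorial (k - j)) /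
    (((k - j + 1 : ℕ) : ℝ) * (n : ℝ) ^ (k - j))

/-- `p_j^-`. -/
noncomputable def pjMinus (k j n : ℕ) : ℝ :=
  (1 - 1 / Real.sqrt (Real.log n)) * ((j + 1 : ℝ) * Real.log n) * (Nat.factorial (k - j)) /
    (((k - j + 1 : ℕ) : ℝ) * (n : ℝ) ^ (k - j))

/-- `p_{j-1}^-`. -/
noncomputable def pjPrevMinus (k j n : ℕ) : ℝ :=
  (1 - 1 / Real.sqrt (Real.log n)) * ((j : ℝ) * Real.log n) * (Nat.factorial (k - j + 1)) /
    (((k - j + 2 : ℕ) : ℝ) * (n : ℝ) ^ (k - j + 1))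

/-- `p_j^{(1)}`. -/
noncomputable def pjOne (k j n : ℕ) : ℝ :=
  1 / (10 * ((j : ℝ) + 1) * (Nat.choose (k + 1) (j + 1)) * (n : ℝ) ^ (k - j))

/-- The number of copies of `M_j^-` in `G`. -/
noncomputable def countMjMinus (k j : ℕ) {n : ℕ} (G : Set (Finset (Fin n))) : ℕ :=
  {x : Finset (Fin n) × Finset (Fin n) | IsMjMinus G k j x.1 x.2}.ncard

/-- The number of copies of `M_j^*` in `G`. -/
noncomputable def countMjStar (k j : ℕ) {n : ℕ} (G : Set (Finset (Fin n))) : ℕ :=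
  {x : Finset (Fin n) × Finset (Fin n) × Fin n × Fin n |
    IsMjStar G k j x.1 x.2.1 x.2.2.1 x.2.2.2}.ncard


/-!
Fix `(j + 1) / (k - j + 2) < b < (j + 1) / (k - j + 1)` and `b₁ > j + 1`, and let `p₀` and `p₁` be
the values of `p` at which a set of `j + 1` vertices lies in about `b * log n` and `b₁ * log n`
facets, respectively.

At `p₀` every set of `j` vertices extends to a `j`-simplex by all but a small proportion of the
vertices. Coning with a common extension then shows that cohomology vanishes in degrees below `j`,
and that every copy of `M_j^-` extends to a copy of `M_j`, with a shell through a petal as the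
cycle. By the second moment method there is a copy of `M_j^-` at `p₀`, hence `p₀ ≤ p_{M_j}`.

In degree `j`, consider a non-trivial cocycle whose support `S` is as small as possible. By
minimality, the facets meeting `S` connect it, so at most `#S` facets, each sharing `j + 1`
vertices with another one, certify `S`; on the other hand no set of `j + 2` vertices with an odd
number of faces in `S` lies in a facet, which excludes about `#S * n ^ (k - j) / (k - j)!` facets
if `#S` is bounded, and always a constant proportion of that number. Up to powers of `log n`, such
a configuration of bounded size `s` thus occurs for some `p ∈ [p₀, p₁]` with probability at most
`n ^ (j + 1 - b * s)`, and the large sizes have summable probabilities, so that with high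
probability `#S ≤ k - j + 1`. At `p₁` the same bound leaves no `S` at all, and as the `j`-skeleton
is complete at `p₁` this persists for `p ≥ p₁`.

Finally, if `#S ≤ k - j + 1`, then a facet meeting `S` contains a flower none of whose petals lies
in another facet, that is, a copy of `M_j^-`. Hence a non-trivial cocycle at some `p ∈ [p₀, p₁]`
yields a copy of `M_j` at `p`. As `G_p` is right-continuous in `p`, it persists beyond `p`, so
`p < p_{M_j}`.
-/

section Cochains

open Finset

/-! ### Cochains on finite sets -/

/-- The `F₂`-coboundary of a function on all finite sets: its sum over the `i`-element subsets
of `R`. Working with functions on all finite sets, rather than with cochains on a complex, lets the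
complex vary. -/
def faceSum (i : ℕ) (F : Finset V → ZMod 2) (R : Finset V) : ZMod 2 :=
  ∑ σ ∈ R.powersetCard i, F σ

/-- `F` restricts to a `j`-cocycle of `G`. -/
def IsCocycleOn (G : Set (Finset V)) (j : ℕ) (F : Finset V → ZMod 2) : Prop :=
  ∀ R ∈ G, #R = j + 2 → faceSum (j + 1) F R = 0

/-- `F` restricts to the coboundary of a `(j - 1)`-cochain of `G`; as `∅` counts as a face here, for
`j = 0` this is the coboundary of the augmented cochain complex. -/
def IsCoboundaryOn (G : Set (Finset V)) (j : ℕ) (F : Finset V → ZMod 2) : Prop :=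
  ∃ g : Finset V → ZMod 2, ∀ σ ∈ G, #σ = j + 1 → F σ = faceSum j g σ

/-- The `j`-th reduced `F₂`-cohomology of `G` vanishes. -/
def ReducedCohomologyVanishes (G : Set (Finset V)) (j : ℕ) : Prop :=
  ∀ F : Finset V → ZMod 2, IsCocycleOn G j F → IsCoboundaryOn G j F

/-- Extension by zero of a cochain of `G` to all finite sets. -/
noncomputable def extendByZero {G : Set (Finset V)} {i : ℕ} (f : Cochain G i) (σ : Finset V) :
    ZMod 2 :=
  if h : IsSimplex G i σ then f ⟨σ, h⟩ else 0

lemma extendByZero_coe {G : Set (Finset V)} {i : ℕ} (f : Cochain G i)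
    (σ : {A : Finset V // IsSimplex G i A}) : extendByZero f σ = f σ :=
  dif_pos σ.2

lemma isCocycleOn_extendByZero {G : Set (Finset V)} {i : ℕ} {f : Cochain G i}
    (hf : f ∈ cocycles G i) : IsCocycleOn G i (extendByZero f) := fun R hR hRcard ↦
  congrFun (LinearMap.mem_ker.1 hf) ⟨R, hR, hRcard⟩

lemma coboundary_restrict {G : Set (Finset V)} (hG : IsRelLowerSet G Finset.Nonempty) {i : ℕ}
    (g : Finset V → ZMod 2) (σ : {A : Finset V // IsSimplex G (i + 1) A}) :
    coboundary G i (fun τ ↦ g τ) σ = faceSum (i + 1) g σ := by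
  refine sum_congr rfl fun τ hτ ↦ dif_pos ?_
  obtain ⟨hτσ, hτcard⟩ := mem_powersetCard.1 hτ
  exact ⟨hG.mem_of_le σ.2.1 hτσ (card_pos.1 (by lia)), hτcard⟩

lemma subsingleton_cohomology {G : Set (Finset V)} (hG : IsRelLowerSet G Finset.Nonempty) {j : ℕ}
    (hj : j ≠ 0) (h : ReducedCohomologyVanishes G j) : Subsingleton (cohomology G j) := by
  obtain ⟨i, rfl⟩ := Nat.exists_eq_succ_of_ne_zero hj
  rw [Submodule.Quotient.subsingleton_iff, Submodule.comap_subtype_eq_top]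
  intro f hf
  obtain ⟨g, hg⟩ := h _ (isCocycleOn_extendByZero hf)
  refine ⟨fun τ ↦ g τ, funext fun σ ↦ ?_⟩
  rw [coboundary_restrict hG, ← hg σ σ.2.1 σ.2.2, extendByZero_coe]

lemma const_mem_cocycles {G : Set (Finset V)} (hsing : ∀ v : V, {v} ∈ G) (c : ZMod 2) :
    (fun _ ↦ c) ∈ cocycles G 0 := by
  refine LinearMap.mem_ker.2 (funext fun σ ↦ ?_)
  have hface : ∀ τ ∈ σ.1.powersetCard 1, IsSimplex G 0 τ := by
    intro τ hτ
    obtain ⟨x, rfl⟩ := card_eq_one.1 (mem_powersetCard.1 hτ).2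
    exact ⟨hsing x, card_singleton x⟩
  calc coboundary G 0 (fun _ ↦ c) σ
      = ∑ _τ ∈ σ.1.powersetCard 1, c := sum_congr rfl fun τ hτ ↦ dif_pos (hface τ hτ)
    _ = 2 • c := by rw [sum_const, card_powersetCard, σ.2.2, Nat.choose_one_right]
    _ = 0 := CharTwo.two_nsmul c

lemma nonempty_cohomology_zero_equiv [Nonempty V] {G : Set (Finset V)}
    (hsing : ∀ v : V, {v} ∈ G) (h : ReducedCohomologyVanishes G 0) :
    Nonempty (cohomology G 0 ≃ₗ[ZMod 2] ZMod 2) := by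
  let v := Classical.arbitrary V
  have hv : IsSimplex G 0 {v} := ⟨hsing v, card_singleton v⟩
  let evalAt : cocycles G 0 →ₗ[ZMod 2] ZMod 2 :=
    (LinearMap.proj (⟨{v}, hv⟩ : {A : Finset V // IsSimplex G 0 A})) ∘ₗ (cocycles G 0).subtype
  have hconst : ∀ f : cocycles G 0, ∀ σ, f.1 σ = evalAt f := by
    intro f σ
    obtain ⟨g, hg⟩ := h _ (isCocycleOn_extendByZero f.2)
    have hg_empty : ∀ τ : {A : Finset V // IsSimplex G 0 A}, f.1 τ = g ∅ := fun τ ↦ by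
      rw [← extendByZero_coe f.1 τ, hg τ τ.2.1 τ.2.2, faceSum, powersetCard_zero, sum_singleton]
    exact (hg_empty σ).trans (hg_empty ⟨{v}, hv⟩).symm
  have hbij : Function.Bijective evalAt := by
    refine ⟨fun f f' hff' ↦ Subtype.ext (funext fun σ ↦ ?_),
      fun c ↦ ⟨⟨_, const_mem_cocycles hsing c⟩, rfl⟩⟩
    rw [hconst f, hconst f', hff']
  have hbot : (coboundaries G 0).comap (cocycles G 0).subtype = ⊥ := by
    rw [coboundaries, Submodule.comap_bot, Submodule.ker_subtype]
  exact ⟨(Submodule.quotEquivOfEqBot _ hbot).trans (LinearEquiv.ofBijective evalAt hbij)⟩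

lemma cohomConnected_of_reducedCohomologyVanishes [Nonempty V] {G : Set (Finset V)}
    (hG : IsRelLowerSet G Finset.Nonempty) (hsing : ∀ v : V, {v} ∈ G) {j : ℕ}
    (h : ∀ i ≤ j, ReducedCohomologyVanishes G i) : CohomConnected G j :=
  ⟨nonempty_cohomology_zero_equiv hsing (h 0 (Nat.zero_le j)),
    fun i hi hij ↦ subsingleton_cohomology hG (by lia) (h i hij)⟩

lemma faceSum_add (i : ℕ) (F F' : Finset V → ZMod 2) (R : Finset V) :
    faceSum i (F + F') R = faceSum i F R + faceSum i F' R :=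
  sum_add_distrib

lemma faceSum_congr {i : ℕ} {F F' : Finset V → ZMod 2} {R : Finset V}
    (h : ∀ σ ⊆ R, #σ = i → F σ = F' σ) : faceSum i F R = faceSum i F' R :=
  sum_congr rfl fun σ hσ ↦ h σ (mem_powersetCard.1 hσ).1 (mem_powersetCard.1 hσ).2

lemma faceSum_of_card_eq (F : Finset V → ZMod 2) {i : ℕ} {σ : Finset V} (hσ : #σ = i) :
    faceSum i F σ = F σ := by
  rw [faceSum, ← hσ, powersetCard_self, sum_singleton]

lemma faceSum_insert (i : ℕ) (F : Finset V → ZMod 2) {v : V} {σ : Finset V} (hv : v ∉ σ) :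
    faceSum (i + 1) F (insert v σ) =
      faceSum (i + 1) F σ + faceSum i (fun τ ↦ F (insert v τ)) σ := by
  have hvτ : ∀ τ ∈ σ.powersetCard i, v ∉ τ := fun τ hτ hvτ ↦ hv ((mem_powersetCard.1 hτ).1 hvτ)
  have hdisj : Disjoint (σ.powersetCard (i + 1)) ((σ.powersetCard i).image (insert v)) := by
    refine disjoint_left.2 fun τ hτ hτ' ↦ ?_
    obtain ⟨ρ, -, rfl⟩ := mem_image.1 hτ'
    exact hv ((mem_powersetCard.1 hτ).1 (mem_insert_self v ρ))
  have hinj : Set.InjOn (insert v) (σ.powersetCard i : Set (Finset V)) :=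
    (insert_erase_invOn (a := v)).2.injOn.mono hvτ
  rw [faceSum, powersetCard_succ_insert hv, sum_union hdisj, sum_image hinj]
  rfl

lemma card_faces_containing_eq_two {i : ℕ} {τ R : Finset V} (hτR : τ ⊆ R) (hτ : #τ = i)
    (hR : #R = i + 2) : #{σ ∈ R.powersetCard (i + 1) | τ ⊆ σ} = 2 := by
  rw [card_filter_powersetCard_subset τ R (i + 1) hτR (by lia), hτ, hR]
  simp

lemma faceSum_faceSum {i : ℕ} (F : Finset V → ZMod 2) {R : Finset V} (hR : #R = i + 2) :
    faceSum (i + 1) (faceSum i F) R = 0 := by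
  have hswap : faceSum (i + 1) (faceSum i F) R =
      ∑ τ ∈ R.powersetCard i, ∑ _σ ∈ R.powersetCard (i + 1) with τ ⊆ _σ, F τ := by
    refine sum_comm' fun σ τ ↦ ?_
    simp only [mem_powersetCard, mem_filter]
    exact ⟨fun h ↦ ⟨⟨h.1, h.2.1⟩, h.2.1.trans h.1.1, h.2.2⟩, fun h ↦ ⟨h.1.1, h.1.2, h.2.2⟩⟩
  rw [hswap]
  refine sum_eq_zero fun τ hτ ↦ ?_
  obtain ⟨hτR, hτcard⟩ := mem_powersetCard.1 hτ
  rw [sum_const, card_faces_containing_eq_two hτR hτcard hR, CharTwo.two_nsmul]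

lemma even_card_faces_containing {j : ℕ} {R τ : Finset V} (hR : #R = j + 2) (hτ : #τ = j) :
    Even #{σ ∈ R.powersetCard (j + 1) | τ ⊆ σ} := by
  by_cases hτR : τ ⊆ R
  · rw [card_faces_containing_eq_two hτR hτ hR]
    exact even_two
  · rw [filter_eq_empty_iff.2 fun σ hσ hτσ ↦ hτR (hτσ.trans (mem_powersetCard.1 hσ).1)]
    exact Even.zero

/-- The link of `F` at `v`, extended by zero to the sets containing `v`. Its coboundary is the
cochain whose addition to a cocycle `F` pushes the support of `F` away from `v`. -/
noncomputable def linkAt (v : V) (F : Finset V → ZMod 2) (τ : Finset V) : ZMod 2 :=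
  if v ∈ τ then 0 else F (insert v τ)

lemma faceSum_linkAt_of_notMem {v : V} {σ : Finset V} (hv : v ∉ σ) (F : Finset V → ZMod 2)
    (i : ℕ) : faceSum i (linkAt v F) σ = faceSum i (fun τ ↦ F (insert v τ)) σ :=
  faceSum_congr fun _ hτ _ ↦ if_neg fun hvτ ↦ hv (hτ hvτ)

lemma faceSum_linkAt_of_mem {v : V} {σ : Finset V} (hv : v ∈ σ) (F : Finset V → ZMod 2) {i : ℕ}
    (hσ : #σ = i + 1) : faceSum i (linkAt v F) σ = F σ := by
  have hmem : σ.erase v ∈ σ.powersetCard i :=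
    mem_powersetCard.2 ⟨erase_subset v σ, by rw [card_erase_of_mem hv, hσ, Nat.add_sub_cancel]⟩
  rw [faceSum, sum_eq_single_of_mem _ hmem]
  · rw [linkAt, if_neg (notMem_erase v σ), insert_erase hv]
  · intro τ hτ hne
    obtain ⟨hτσ, hτcard⟩ := mem_powersetCard.1 hτ
    refine if_pos (by_contra fun hvτ ↦ hne ?_)
    exact eq_of_subset_of_card_le (subset_erase.2 ⟨hτσ, hvτ⟩)
      (by rw [card_erase_of_mem hv]; lia)

lemma faceSum_linkAt_add {v : V} {σ : Finset V} (hv : v ∉ σ) (F : Finset V → ZMod 2) {j : ℕ}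
    (hσ : #σ = j + 1) :
    F σ + faceSum j (linkAt v F) σ = faceSum (j + 1) F (insert v σ) := by
  rw [faceSum_insert j F hv, faceSum_of_card_eq F hσ, faceSum_linkAt_of_notMem hv]

lemma isCoboundaryOn_of_forall_faceSum_eq_zero [Nonempty V] (G : Set (Finset V)) {j : ℕ}
    {F : Finset V → ZMod 2} (h : ∀ R : Finset V, #R = j + 2 → faceSum (j + 1) F R = 0) :
    IsCoboundaryOn G j F := by
  let v := Classical.arbitrary V
  refine ⟨linkAt v F, fun σ _ hσ ↦ ?_⟩
  by_cases hv : v ∈ σ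
  · rw [faceSum_linkAt_of_mem hv F hσ]
  · rw [← CharTwo.add_eq_zero, faceSum_linkAt_add hv F hσ]
    exact h _ (by rw [card_insert_of_notMem hv, hσ])

end Cochains

section NearlyComplete

open Finset

/-! ### Nearly complete skeletons -/

/-- The vertices that cannot be added to `B` within `G`. -/
noncomputable def missingExtensions [Fintype V] (G : Set (Finset V)) (B : Finset V) : Finset V :=
  {a | a ∉ B ∧ insert a B ∉ G}

/-- Every `j`-element set extends within `G` by all but at most `m` vertices. -/
def IsNearlyComplete [Fintype V] (G : Set (Finset V)) (j m : ℕ) : Prop :=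
  ∀ B : Finset V, #B = j → #(missingExtensions G B) ≤ m

variable [Fintype V] {G : Set (Finset V)} {j k m : ℕ}

lemma IsNearlyComplete.mono {G' : Set (Finset V)} (h : IsNearlyComplete G j m) (hGG' : G ⊆ G') :
    IsNearlyComplete G' j m := fun B hB ↦
  (card_le_card (monotone_filter_right _ fun _ _ ha ↦ ⟨ha.1, fun hG ↦ ha.2 (hGG' hG)⟩)).trans
    (h B hB)

lemma IsNearlyComplete.exists_common_extension (h : IsNearlyComplete G j m) {A K : Finset V}
    (hAK : A ⊆ K) (hcard : (#A).choose j * m + #K < Fintype.card V) :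
    ∃ v ∉ K, ∀ B ∈ A.powersetCard j, insert v B ∈ G := by
  have hmissing : #((A.powersetCard j).biUnion (missingExtensions G)) ≤ (#A).choose j * m := by
    rw [← card_powersetCard]
    exact card_biUnion_le_card_mul _ _ _ fun B hB ↦ h B (mem_powersetCard.1 hB).2
  obtain ⟨v, hv⟩ : ∃ v, v ∉ (A.powersetCard j).biUnion (missingExtensions G) ∪ K := by
    by_contra! hall
    have := card_union_le ((A.powersetCard j).biUnion (missingExtensions G)) K
    rw [eq_univ_of_forall hall, card_univ] at this
    lia
  simp only [mem_union, mem_biUnion, missingExtensions, mem_filter_univ, not_or, not_exists,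
    not_and, not_not] at hv
  exact ⟨v, hv.2, fun B hB ↦
    hv.1 B hB fun hvB ↦ hv.2 (hAK ((mem_powersetCard.1 hB).1 hvB))⟩

lemma IsNearlyComplete.mem_of_card_le (h : IsNearlyComplete G j m)
    (hG : IsRelLowerSet G Finset.Nonempty) (hV : (j + 1) * m + (j + 1) < Fintype.card V)
    {A : Finset V} (hA : A.Nonempty) (hAj : #A ≤ j) : A ∈ G := by
  obtain ⟨A', hAA', -, hA'⟩ := exists_subsuperset_card_eq (subset_univ A) (n := j + 1) (by lia)
    (by rw [card_univ]; nlinarith)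
  obtain ⟨B, hAB, hBA', hB⟩ := exists_subsuperset_card_eq hAA' hAj (by lia)
  obtain ⟨v, -, hv⟩ := h.exists_common_extension subset_rfl (A := A') (by
    rwa [hA', Nat.choose_succ_self_right])
  exact hG.mem_of_le (hv B (mem_powersetCard.2 ⟨hBA', hB⟩)) (hAB.trans (subset_insert v B)) hA

lemma IsNearlyComplete.reducedCohomologyVanishes (h : IsNearlyComplete G j m)
    (hG : IsRelLowerSet G Finset.Nonempty) (hV : (j + 1) * m + (j + 1) < Fintype.card V) {i : ℕ}
    (hi : i < j) : ReducedCohomologyVanishes G i := by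
  intro F hF
  have : Nonempty V := Fintype.card_pos_iff.1 (by lia)
  refine isCoboundaryOn_of_forall_faceSum_eq_zero G fun R hR ↦ ?_
  rcases (show i + 2 ≤ j ∨ j = i + 1 by lia) with hij | rfl
  · exact hF R (h.mem_of_card_le hG hV (card_pos.1 (by lia)) (by lia)) hR
  · obtain ⟨v, hvR, hv⟩ := h.exists_common_extension subset_rfl (A := R) (by
      rwa [hR, Nat.choose_succ_self_right])
    have hcone := faceSum_faceSum (i := i + 1) F (R := insert v R) (by
      rw [card_insert_of_notMem hvR, hR])
    have hlink : faceSum (i + 1) (fun τ ↦ faceSum (i + 1) F (insert v τ)) R = 0 := by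
      refine sum_eq_zero fun τ hτ ↦ hF _ (hv τ hτ) ?_
      obtain ⟨hτR, hτcard⟩ := mem_powersetCard.1 hτ
      rw [card_insert_of_notMem fun hvτ ↦ hvR (hτR hvτ), hτcard]
    rwa [faceSum_insert _ _ hvR, faceSum_of_card_eq _ hR, hlink, add_zero] at hcone

omit [Fintype V] in
lemma IsShell.isCycle {R : Finset V} (hR : IsShell G j R) :
    IsCycle G j (R.powersetCard (j + 1)) := by
  refine ⟨fun σ hσ ↦ ?_, fun τ hτ ↦ even_card_faces_containing hR.1 hτ⟩
  obtain ⟨hσR, hσ⟩ := mem_powersetCard.1 hσ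
  exact ⟨hR.2 σ hσR hσ, hσ⟩

omit [Fintype V] in
lemma isShell_insert {A : Finset V} (hA : A ∈ G) (hAcard : #A = j + 1) {v : V} (hvA : v ∉ A)
    (hv : ∀ B ∈ A.powersetCard j, insert v B ∈ G) : IsShell G j (insert v A) := by
  refine ⟨by rw [card_insert_of_notMem hvA, hAcard], fun σ hσ hσcard ↦ ?_⟩
  by_cases hvσ : v ∈ σ
  · rw [← insert_erase hvσ]
    exact hv _ (mem_powersetCard.2
      ⟨subset_insert_iff.1 hσ, by rw [card_erase_of_mem hvσ, hσcard, Nat.add_sub_cancel]⟩)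
  · rwa [eq_of_subset_of_card_le ((subset_insert_iff_of_notMem hvσ).1 hσ) (by lia)]

lemma IsNearlyComplete.exists_isMj [DecidableEq V] (h : IsNearlyComplete G j m)
    (hG : IsRelLowerSet G Finset.Nonempty) (hjk : j ≤ k)
    (hV : (j + 1) * m + (k + 1) < Fintype.card V) {K C : Finset V} (hM : IsMjMinus G k j K C) :
    ∃ J, IsMj G k j K C J := by
  obtain rfl := Subsingleton.elim ‹DecidableEq V› fun _ _ ↦ Classical.propDecidable _
  obtain ⟨hK, -, hC, hCK, -⟩ := id hM
  obtain ⟨w, hwK, hwC⟩ := exists_mem_notMem_of_card_lt_card (show #C < #K by rw [hK.2]; lia)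
  have hcard : #(insert w C) = j + 1 := by rw [card_insert_of_notMem hwC, hC]
  have hPK : insert w C ⊆ K := insert_subset hwK hCK
  obtain ⟨v, hvK, hv⟩ := h.exists_common_extension hPK (by
    rwa [hcard, Nat.choose_succ_self_right, hK.2])
  have hshell : IsShell G j (insert v (insert w C)) :=
    isShell_insert (hG.mem_of_le hK.1 hPK (insert_nonempty w C)) hcard (fun hvP ↦ hvK (hPK hvP)) hv
  refine ⟨_, hM, hshell.isCycle, insert w C, ⟨mem_powersetCard.2 ⟨subset_insert v _, hcard⟩,
    w, mem_sdiff.2 ⟨hwK, hwC⟩, rfl⟩, ?_⟩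
  rintro P ⟨hP, w', hw', rfl⟩
  obtain ⟨hw'K, hw'C⟩ := mem_sdiff.1 hw'
  have hw'shell := (mem_powersetCard.1 hP).1 (mem_insert_self w' C)
  simp only [mem_insert] at hw'shell
  rcases hw'shell with rfl | rfl | hmem
  · exact absurd hw'K hvK
  · rfl
  · exact absurd hmem hw'C

end NearlyComplete

section BirthTimes

open Finset

/-! ### Pure complexes and the complexes `G_p` -/

/-- A simplicial complex all of whose simplices of positive dimension lie in a `k`-simplex. -/
structure IsPure (G : Set (Finset V)) (k : ℕ) : Prop where
  isRelLowerSet : IsRelLowerSet G Finset.Nonempty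
  exists_facet : ∀ A ∈ G, 2 ≤ #A → ∃ K, IsSimplex G k K ∧ A ⊆ K

lemma IsPure.mem_of_subset {G : Set (Finset V)} {k : ℕ} (hG : IsPure G k) {A B : Finset V}
    (hA : A ∈ G) (hBA : B ⊆ A) (hB : 0 < #B) : B ∈ G :=
  hG.isRelLowerSet.mem_of_le hA hBA (card_pos.1 hB)

variable {k n : ℕ} {t : Finset (Fin n) → ℝ} {p q : ℝ}

lemma singleton_mem_complexAt (v : Fin n) : {v} ∈ complexAt k n t p := Or.inl ⟨v, rfl⟩

lemma complexAt_mono (hpq : p ≤ q) : complexAt k n t p ⊆ complexAt k n t q :=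
  Set.union_subset_union_right _ fun _ ⟨hA, K, hK, htK, hAK⟩ ↦ ⟨hA, K, hK, htK.trans hpq, hAK⟩

lemma mem_complexAt_iff {A : Finset (Fin n)} (hA : 2 ≤ #A) :
    A ∈ complexAt k n t p ↔ ∃ K : Finset (Fin n), #K = k + 1 ∧ t K ≤ p ∧ A ⊆ K := by
  constructor
  · rintro (⟨v, rfl⟩ | ⟨-, hK⟩)
    · simp at hA
    · exact hK
  · exact fun hK ↦ Or.inr ⟨card_pos.1 (by lia), hK⟩

lemma isSimplex_complexAt_iff (hk : 1 ≤ k) {K : Finset (Fin n)} :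
    IsSimplex (complexAt k n t p) k K ↔ #K = k + 1 ∧ t K ≤ p := by
  constructor
  · rintro ⟨hK, hcard⟩
    obtain ⟨K', hK', htK', hKK'⟩ := (mem_complexAt_iff (by lia)).1 hK
    obtain rfl := eq_of_subset_of_card_le hKK' (by lia)
    exact ⟨hcard, htK'⟩
  · exact fun ⟨hcard, htK⟩ ↦ ⟨(mem_complexAt_iff (by lia)).2 ⟨K, hcard, htK, subset_rfl⟩, hcard⟩

lemma isPure_complexAt : IsPure (complexAt k n t p) k where
  isRelLowerSet := by
    rintro A (⟨v, rfl⟩ | ⟨hA, K, hK, htK, hAK⟩)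
    · exact ⟨singleton_nonempty v, fun B hB hne ↦
        Or.inl ⟨v, (subset_singleton_iff.1 hB).resolve_left hne.ne_empty⟩⟩
    · exact ⟨hA, fun B hB hne ↦ Or.inr ⟨hne, K, hK, htK, hB.trans hAK⟩⟩
  exists_facet A hA hcard := by
    obtain ⟨K, hK, htK, hAK⟩ := (mem_complexAt_iff hcard).1 hA
    exact ⟨K, ⟨Or.inr ⟨card_pos.1 (by lia), K, hK, htK, subset_rfl⟩, hK⟩, hAK⟩

lemma exists_complexAt_eq_of_lt_one (hp : p < 1) :
    ∃ q, p < q ∧ q ≤ 1 ∧ complexAt k n t q = complexAt k n t p := by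
  have hborn : ∀ᶠ q in nhdsWithin p (Set.Ioi p), ∀ K, p < t K → q < t K :=
    eventually_all.2 fun K ↦ eventually_imp_distrib_left.2 fun hK ↦
      mem_nhdsWithin_of_mem_nhds (gt_mem_nhds hK)
  have hlt : ∀ᶠ q in nhdsWithin p (Set.Ioi p), q < 1 :=
    mem_nhdsWithin_of_mem_nhds (gt_mem_nhds hp)
  obtain ⟨q, hq, hq1, hpq⟩ := (hborn.and (hlt.and self_mem_nhdsWithin)).exists
  refine ⟨q, hpq, hq1.le, (complexAt_mono (le_of_lt hpq)).antisymm' ?_⟩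
  exact Set.union_subset_union_right _ fun A ⟨hA, K, hK, htK, hAK⟩ ↦
    ⟨hA, K, hK, not_lt.1 fun hpK ↦ (hq K hpK).not_ge htK, hAK⟩

lemma le_pMj {j : ℕ} {K C : Finset (Fin n)} {J : Finset (Finset (Fin n))}
    (hp : p ∈ Set.Icc (0 : ℝ) 1) (hM : IsMj (complexAt k n t p) k j K C J) : p ≤ pMj k j n t :=
  le_csSup ⟨1, fun _ hq ↦ hq.1.2⟩ ⟨hp, K, C, J, hM⟩

lemma lt_pMj {j : ℕ} {K C : Finset (Fin n)} {J : Finset (Finset (Fin n))} (hp0 : 0 ≤ p)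
    (hp1 : p < 1) (hM : IsMj (complexAt k n t p) k j K C J) : p < pMj k j n t := by
  obtain ⟨q, hpq, hq1, heq⟩ := exists_complexAt_eq_of_lt_one (k := k) (t := t) hp1
  exact hpq.trans_le (le_pMj ⟨hp0.trans hpq.le, hq1⟩ (heq ▸ hM))

end BirthTimes

section MinimalObstructions

open Finset

/-! ### Minimal obstructions -/

/-- `S` is the support of a `j`-cocycle of `G`. -/
structure IsCocycleSupport (G : Set (Finset V)) (j : ℕ) (S : Finset (Finset V)) : Prop where
  isSimplex : ∀ σ ∈ S, IsSimplex G j σ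
  even_card : ∀ R ∈ G, #R = j + 2 → Even #{σ ∈ S | σ ⊆ R}

/-- A smallest support of a `j`-cocycle of `G` that is not a coboundary. -/
structure IsMinimalObstruction (G : Set (Finset V)) (j : ℕ) (S : Finset (Finset V)) : Prop
    extends IsCocycleSupport G j S where
  not_isCoboundaryOn : ¬ IsCoboundaryOn G j (Set.indicator S 1)
  card_le : ∀ S', IsCocycleSupport G j S' → ¬ IsCoboundaryOn G j (Set.indicator S' 1) → #S ≤ #S'

/-- The support of the `j`-cochain of `G` defined by `F`. -/
noncomputable def simplexSupport [Fintype V] (G : Set (Finset V)) (j : ℕ) (F : Finset V → ZMod 2) :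
    Finset (Finset V) :=
  {σ | IsSimplex G j σ ∧ F σ = 1}

/-- The `(j + 2)`-sets on which the coboundary of the indicator of `S` does not vanish. -/
noncomputable def oddCofaces [Fintype V] (j : ℕ) (S : Finset (Finset V)) : Finset (Finset V) :=
  {R ∈ univ.powersetCard (j + 2) | Odd #{σ ∈ S | σ ⊆ R}}

variable {G : Set (Finset V)} {j k : ℕ} {F F' : Finset V → ZMod 2} {S : Finset (Finset V)}

lemma IsCocycleOn.congr (hG : IsRelLowerSet G Finset.Nonempty)
    (h : ∀ σ, IsSimplex G j σ → F σ = F' σ) (hF : IsCocycleOn G j F) : IsCocycleOn G j F' :=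
  fun R hR hRcard ↦ (faceSum_congr fun σ hσR hσ ↦
    (h σ ⟨hG.mem_of_le hR hσR (card_pos.1 (by lia)), hσ⟩).symm).trans (hF R hR hRcard)

lemma IsCoboundaryOn.congr (h : ∀ σ, IsSimplex G j σ → F σ = F' σ) (hF : IsCoboundaryOn G j F) :
    IsCoboundaryOn G j F' :=
  hF.imp fun _ hg σ hσG hσ ↦ (h σ ⟨hσG, hσ⟩).symm.trans (hg σ hσG hσ)

lemma IsCoboundaryOn.add (hF : IsCoboundaryOn G j F) (hF' : IsCoboundaryOn G j F') :
    IsCoboundaryOn G j (F + F') := by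
  obtain ⟨g, hg⟩ := hF
  obtain ⟨g', hg'⟩ := hF'
  exact ⟨g + g', fun σ hσG hσ ↦ by rw [Pi.add_apply, hg σ hσG hσ, hg' σ hσG hσ, faceSum_add]⟩

lemma isCoboundaryOn_faceSum (G : Set (Finset V)) (j : ℕ) (g : Finset V → ZMod 2) :
    IsCoboundaryOn G j (faceSum j g) :=
  ⟨g, fun _ _ _ ↦ rfl⟩

lemma isCocycleOn_faceSum (G : Set (Finset V)) (j : ℕ) (g : Finset V → ZMod 2) :
    IsCocycleOn G j (faceSum j g) :=
  fun _ _ hR ↦ faceSum_faceSum g hR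

lemma IsCocycleOn.add (hF : IsCocycleOn G j F) (hF' : IsCocycleOn G j F') :
    IsCocycleOn G j (F + F') := fun R hR hRcard ↦ by
  rw [faceSum_add, hF R hR hRcard, hF' R hR hRcard, add_zero]

lemma faceSum_indicator {i : ℕ} (hS : ∀ σ ∈ S, #σ = i) (R : Finset V) :
    faceSum i (Set.indicator S 1) R = #{σ ∈ S | σ ⊆ R} := by
  simp only [faceSum, Set.indicator_apply, Pi.one_apply, mem_coe, sum_boole]
  congr 2
  ext σ
  simp only [mem_filter, mem_powersetCard]
  exact ⟨fun h ↦ ⟨h.2, h.1.1⟩, fun h ↦ ⟨⟨h.2, hS σ h.1⟩, h.1⟩⟩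

lemma isCocycleSupport_iff :
    IsCocycleSupport G j S ↔
      (∀ σ ∈ S, IsSimplex G j σ) ∧ IsCocycleOn G j (Set.indicator S 1) := by
  have hiff (hS : ∀ σ ∈ S, IsSimplex G j σ) (R : Finset V) :
      faceSum (j + 1) (Set.indicator S 1) R = 0 ↔ Even #{σ ∈ S | σ ⊆ R} := by
    rw [faceSum_indicator (fun σ hσ ↦ (hS σ hσ).2), ZMod.natCast_eq_zero_iff_even]
  exact ⟨fun h ↦ ⟨h.1, fun R hR hRcard ↦ (hiff h.1 R).2 (h.2 R hR hRcard)⟩,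
    fun h ↦ ⟨h.1, fun R hR hRcard ↦ (hiff h.1 R).1 (h.2 R hR hRcard)⟩⟩

lemma IsMinimalObstruction.nonempty (hS : IsMinimalObstruction G j S) : S.Nonempty := by
  by_contra! hempty
  refine hS.not_isCoboundaryOn ⟨0, fun σ _ _ ↦ ?_⟩
  simp [hempty, faceSum]

section Fintype

variable [Fintype V]

lemma indicator_simplexSupport (F : Finset V → ZMod 2) {σ : Finset V} (hσ : IsSimplex G j σ) :
    Set.indicator (simplexSupport G j F) 1 σ = F σ := by
  obtain h | h : F σ = 0 ∨ F σ = 1 := by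
    generalize F σ = a
    decide +revert
  · rw [Set.indicator_of_notMem (by simp [simplexSupport, h]), h]
  · rw [Set.indicator_of_mem (by simp [simplexSupport, hσ, h]), h, Pi.one_apply]

lemma isCocycleSupport_simplexSupport (hG : IsRelLowerSet G Finset.Nonempty)
    (hF : IsCocycleOn G j F) : IsCocycleSupport G j (simplexSupport G j F) :=
  isCocycleSupport_iff.2 ⟨fun _ hσ ↦ ((mem_filter_univ _).1 hσ).1,
    hF.congr hG fun _ hσ ↦ (indicator_simplexSupport F hσ).symm⟩

lemma IsMinimalObstruction.card_le_card_simplexSupport (hS : IsMinimalObstruction G j S)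
    (hG : IsRelLowerSet G Finset.Nonempty) (hF : IsCocycleOn G j F)
    (hF' : ¬ IsCoboundaryOn G j F) : #S ≤ #(simplexSupport G j F) :=
  hS.card_le _ (isCocycleSupport_simplexSupport hG hF) fun h ↦
    hF' (h.congr fun _ hσ ↦ indicator_simplexSupport F hσ)

lemma IsMinimalObstruction.card_le_card_oddCofaces (hS : IsMinimalObstruction G j S)
    (hG : IsRelLowerSet G Finset.Nonempty) (v : V) : #S ≤ #{R ∈ oddCofaces j S | v ∈ R} := by
  set F : Finset V → ZMod 2 := Set.indicator S 1
  set F' := F + faceSum j (linkAt v F) with hF'def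
  have hF'_mem {σ : Finset V} (hσ : σ ∈ simplexSupport G j F') :
      v ∉ σ ∧ #σ = j + 1 ∧ faceSum (j + 1) F (insert v σ) = 1 := by
    obtain ⟨⟨-, hσcard⟩, hF'σ⟩ := (mem_filter_univ σ).1 hσ
    rw [hF'def, Pi.add_apply] at hF'σ
    by_cases hv : v ∈ σ
    · rw [faceSum_linkAt_of_mem hv F hσcard, CharTwo.add_self_eq_zero] at hF'σ
      exact absurd hF'σ zero_ne_one
    · exact ⟨hv, hσcard, faceSum_linkAt_add hv F hσcard ▸ hF'σ⟩
  have hcocycle : IsCocycleOn G j F' :=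
    (isCocycleSupport_iff.1 hS.toIsCocycleSupport).2.add (isCocycleOn_faceSum G j _)
  have hnot : ¬ IsCoboundaryOn G j F' := fun h ↦ hS.not_isCoboundaryOn <| by
    simpa only [hF'def, add_assoc, CharTwo.add_self_eq_zero, add_zero] using
      h.add (isCoboundaryOn_faceSum G j (linkAt v F))
  refine (hS.card_le_card_simplexSupport hG hcocycle hnot).trans
    (card_le_card_of_injOn (insert v) (fun σ hσ ↦ ?_) ?_)
  · obtain ⟨hv, hσcard, hodd⟩ := hF'_mem hσ
    rw [faceSum_indicator (fun σ hσ ↦ (hS.isSimplex σ hσ).2), ZMod.natCast_eq_one_iff_odd] at hodd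
    simp [oddCofaces, hodd, card_insert_of_notMem hv, hσcard]
  · exact (insert_erase_invOn (a := v)).2.injOn.mono fun σ hσ ↦ (hF'_mem hσ).1

lemma IsMinimalObstruction.card_mul_card_le (hS : IsMinimalObstruction G j S)
    (hG : IsRelLowerSet G Finset.Nonempty) :
    Fintype.card V * #S ≤ #(oddCofaces j S) * (j + 2) := by
  rw [← card_univ]
  refine card_mul_le_card_mul (fun v R ↦ v ∈ R)
    (fun v _ ↦ hS.card_le_card_oddCofaces hG v) fun R hR ↦ ?_
  rw [bipartiteBelow, filter_mem_eq_inter, univ_inter,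
    (mem_powersetCard.1 (mem_filter.1 hR).1).2]

end Fintype

lemma exists_isMinimalObstruction [Finite V] (hG : IsRelLowerSet G Finset.Nonempty)
    (h : ¬ ReducedCohomologyVanishes G j) : ∃ S, IsMinimalObstruction G j S := by
  have := Fintype.ofFinite V
  simp only [ReducedCohomologyVanishes, not_forall] at h
  obtain ⟨F, hF, hF'⟩ := h
  obtain ⟨S, ⟨hS, hS'⟩, hmin⟩ := exists_minimalFor_of_wellFoundedLT
    (fun S ↦ IsCocycleSupport G j S ∧ ¬ IsCoboundaryOn G j (Set.indicator S 1)) card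
    ⟨_, isCocycleSupport_simplexSupport hG hF,
      fun h ↦ hF' (h.congr fun _ hσ ↦ indicator_simplexSupport F hσ)⟩
  exact ⟨S, hS, hS', fun S' h h' ↦ (le_total #S #S').elim id (hmin ⟨h, h'⟩)⟩

lemma IsCocycleSupport.of_disjoint {U W : Finset (Finset V)}
    (hS : IsCocycleSupport G j (U ∪ W)) (hUW : Disjoint U W)
    (h : ∀ R ∈ G, #R = j + 2 → ∀ σ ∈ U, σ ⊆ R → ∀ τ ∈ W, ¬ τ ⊆ R) : IsCocycleSupport G j U := by
  refine ⟨fun σ hσ ↦ hS.isSimplex σ (mem_union_left W hσ), fun R hR hRcard ↦ ?_⟩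
  by_cases hU : ∃ σ ∈ U, σ ⊆ R
  · obtain ⟨σ, hσ, hσR⟩ := hU
    have heven := hS.even_card R hR hRcard
    rwa [filter_union, card_union_of_disjoint (disjoint_filter_filter hUW),
      filter_eq_empty_iff.2 (h R hR hRcard σ hσ hσR), card_empty, add_zero] at heven
  · rw [filter_eq_empty_iff.2 fun σ hσ hσR ↦ hU ⟨σ, hσ, hσR⟩]
    exact Even.zero

lemma IsMinimalObstruction.exists_simplex_crossing (hS : IsMinimalObstruction G j S)
    (hG : IsPure G k) {U : Finset (Finset V)} (hUS : U ⊂ S) (hU : U.Nonempty) :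
    ∃ K, IsSimplex G k K ∧ (∃ σ ∈ U, σ ⊆ K) ∧ ∃ σ ∈ S \ U, σ ⊆ K := by
  by_contra! hcross
  have hunion : U ∪ S \ U = S := union_sdiff_of_subset hUS.subset
  have hsep : ∀ R ∈ G, #R = j + 2 → ∀ σ ∈ U, σ ⊆ R → ∀ τ ∈ S \ U, ¬ τ ⊆ R := by
    intro R hR hRcard σ hσ hσR τ hτ hτR
    obtain ⟨K, hK, hRK⟩ := hG.exists_facet R hR (by lia)
    exact hcross K hK ⟨σ, hσ, hσR.trans hRK⟩ τ hτ (hτR.trans hRK)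
  have hcob : ∀ W, IsCocycleSupport G j W → #W < #S → IsCoboundaryOn G j (Set.indicator W 1) :=
    fun W hW hlt ↦ by_contra fun h ↦ (hS.card_le W hW h).not_gt hlt
  have hU_cob : IsCoboundaryOn G j (Set.indicator U 1) :=
    hcob U (.of_disjoint (by rw [hunion]; exact hS.toIsCocycleSupport) disjoint_sdiff hsep)
      (card_lt_card hUS)
  have hsdiff_cob : IsCoboundaryOn G j (Set.indicator (S \ U : Finset (Finset V)) 1) :=
    hcob (S \ U) (.of_disjoint (by rw [union_comm, hunion]; exact hS.toIsCocycleSupport)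
      sdiff_disjoint fun R hR hRcard τ hτ hτR σ hσ hσR ↦ hsep R hR hRcard σ hσ hσR τ hτ hτR)
      (card_lt_card (sdiff_ssubset hUS.subset hU))
  refine hS.not_isCoboundaryOn ?_
  rw [← hunion, coe_union, Set.indicator_union_of_disjoint (disjoint_coe.2 disjoint_sdiff)]
  exact hU_cob.add hsdiff_cob

end MinimalObstructions

section Flowers

open Finset

/-! ### Small cocycles contain a flower -/

variable {G : Set (Finset V)} {j k : ℕ} {S : Finset (Finset V)} {K σ τ : Finset V}

lemma IsCocycleSupport.exists_other_face (hS : IsCocycleSupport G j S) (hσ : σ ∈ S) {w : V}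
    (hw : w ∉ σ) (hwσ : insert w σ ∈ G) : ∃ u ∈ σ, insert w (σ.erase u) ∈ S := by
  have hσcard := (hS.isSimplex σ hσ).2
  have hσ_mem : σ ∈ {τ ∈ S | τ ⊆ insert w σ} := mem_filter.2 ⟨hσ, subset_insert w σ⟩
  have hcard : 1 < #{τ ∈ S | τ ⊆ insert w σ} := by
    have hpos := card_pos.2 ⟨σ, hσ_mem⟩
    obtain ⟨m, hm⟩ := hS.even_card _ hwσ (by rw [card_insert_of_notMem hw, hσcard])
    lia
  obtain ⟨τ, hτ, hne⟩ := exists_mem_ne hcard σ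
  obtain ⟨hτS, hτw⟩ := mem_filter.1 hτ
  have hτcard := (hS.isSimplex τ hτS).2
  obtain ⟨u, hu, huτ⟩ : ∃ u ∈ σ, u ∉ τ :=
    not_subset.1 fun hστ ↦ hne (eq_of_subset_of_card_le hστ (by lia)).symm
  have hτ_eq : τ = insert w (σ.erase u) := by
    have hwu : w ≠ u := fun hwu ↦ hw (hwu ▸ hu)
    rw [← erase_insert_of_ne hwu]
    refine eq_of_subset_of_card_le (subset_erase.2 ⟨hτw, huτ⟩) ?_
    rw [card_erase_of_mem (mem_insert_of_mem hu), card_insert_of_notMem hw]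
    lia
  exact ⟨u, hu, hτ_eq ▸ hτS⟩

lemma IsCocycleSupport.le_card_filter_subset (hS : IsCocycleSupport G j S)
    (hG : IsRelLowerSet G Finset.Nonempty) (hK : IsSimplex G k K) (hσ : σ ∈ S) (hσK : σ ⊆ K) :
    k - j + 1 ≤ #{τ ∈ S | τ ⊆ K ∧ #(σ ∪ τ) ≤ j + 2} := by
  have hσcard := (hS.isSimplex σ hσ).2
  have hexchange : ∀ w ∈ K \ σ, ∃ u ∈ σ, insert w (σ.erase u) ∈ S := by
    intro w hw
    replace hw := mem_sdiff.1 hw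
    exact hS.exists_other_face hσ hw.2
      (hG.mem_of_le hK.1 (insert_subset hw.1 hσK) (insert_nonempty w σ))
  choose! u _ huS using hexchange
  let f (w : V) := insert w (σ.erase (u w))
  have hf_not_subset {w x : V} (hw : w ∈ K \ σ) (hwx : w ∈ f x) : w = x :=
    (mem_insert.1 hwx).resolve_right fun hmem ↦ (mem_sdiff.1 hw).2 (mem_of_mem_erase hmem)
  have hf_inj : Set.InjOn f (K \ σ : Finset V) := fun w hw x _ hwx ↦
    hf_not_subset hw (hwx ▸ mem_insert_self w _)
  have hσ_notMem : σ ∉ (K \ σ).image f := by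
    intro hmem
    obtain ⟨w, hw, hfw⟩ := mem_image.1 hmem
    exact (mem_sdiff.1 hw).2 (hfw ▸ mem_insert_self w _)
  have hsub : insert σ ((K \ σ).image f) ⊆ {τ ∈ S | τ ⊆ K ∧ #(σ ∪ τ) ≤ j + 2} := by
    refine insert_subset (mem_filter.2 ⟨hσ, hσK, by rw [union_self]; lia⟩) ?_
    refine image_subset_iff.2 fun w hw ↦ mem_filter.2 ⟨huS w hw, ?_, ?_⟩
    · exact insert_subset (mem_sdiff.1 hw).1 ((erase_subset _ _).trans hσK)
    · rw [union_insert, union_eq_left.2 (erase_subset _ _),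
        card_insert_of_notMem (mem_sdiff.1 hw).2, hσcard]
  calc k - j + 1 = #(insert σ ((K \ σ).image f)) := by
        rw [card_insert_of_notMem hσ_notMem, card_image_of_injOn hf_inj,
          card_sdiff_of_subset hσK, hK.2, hσcard, Nat.add_sub_add_right]
    _ ≤ _ := card_le_card hsub

lemma IsCocycleSupport.subset_of_card_le (hS : IsCocycleSupport G j S)
    (hG : IsRelLowerSet G Finset.Nonempty) (hcard : #S ≤ k - j + 1) (hK : IsSimplex G k K)
    (hσ : σ ∈ S) (hσK : σ ⊆ K) (hτ : τ ∈ S) : τ ⊆ K ∧ #(σ ∪ τ) ≤ j + 2 := by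
  have heq : {τ ∈ S | τ ⊆ K ∧ #(σ ∪ τ) ≤ j + 2} = S :=
    eq_of_subset_of_card_le (filter_subset _ S)
      (hcard.trans (hS.le_card_filter_subset hG hK hσ hσK))
  rw [← heq] at hτ
  exact (mem_filter.1 hτ).2

lemma IsCocycleSupport.exists_flower_subset (hS : IsCocycleSupport G j S)
    (hG : IsRelLowerSet G Finset.Nonempty) (hjk : j < k) (hcard : #S ≤ k - j + 1)
    (hK : IsSimplex G k K) (hσ : σ ∈ S) (hσK : σ ⊆ K) :
    ∃ C ⊆ σ, #C = j ∧ ∀ w ∈ K \ C, insert w C ∈ S := by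
  have hσcard := (hS.isSimplex σ hσ).2
  have hexchange : ∀ w ∈ K, w ∉ σ → ∃ u ∈ σ, insert w (σ.erase u) ∈ S := fun w hwK hwσ ↦
    hS.exists_other_face hσ hwσ
      (hG.mem_of_le hK.1 (insert_subset hwK hσK) (insert_nonempty w σ))
  obtain ⟨x, hxK, hxσ⟩ := exists_mem_notMem_of_card_lt_card (show #σ < #K by rw [hσcard, hK.2]; lia)
  obtain ⟨u, hu, hxu⟩ := hexchange x hxK hxσ
  refine ⟨σ.erase u, erase_subset u σ, by rw [card_erase_of_mem hu, hσcard, Nat.add_sub_cancel],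
    fun w hw ↦ ?_⟩
  obtain ⟨hwK, hwC⟩ := mem_sdiff.1 hw
  by_cases hwσ : w ∈ σ
  · obtain rfl : w = u := by_contra fun hwu ↦ hwC (mem_erase.2 ⟨hwu, hwσ⟩)
    rwa [insert_erase hu]
  obtain rfl | hwx := eq_or_ne w x
  · exact hxu
  obtain ⟨u', -, hwu'⟩ := hexchange w hwK hwσ
  obtain rfl | huu' := eq_or_ne u' u
  · exact hwu'
  have hunion : insert w (insert x σ) ⊆ insert x (σ.erase u) ∪ insert w (σ.erase u') := by
    intro y hy
    simp only [mem_insert, mem_union, mem_erase] at hy ⊢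
    grind
  have hle := (card_le_card hunion).trans (hS.subset_of_card_le hG hcard hK hxu
    (insert_subset hxK ((erase_subset u σ).trans hσK)) hwu').2
  rw [card_insert_of_notMem (by simp [hwx, hwσ]), card_insert_of_notMem hxσ, hσcard] at hle
  lia

lemma IsCocycleSupport.exists_isMjMinus [DecidableEq V] (hS : IsCocycleSupport G j S)
    (hG : IsPure G k) (hj : 1 ≤ j) (hjk : j < k) (hne : S.Nonempty) (hcard : #S ≤ k - j + 1) :
    ∃ K C, IsMjMinus G k j K C := by
  obtain rfl := Subsingleton.elim ‹DecidableEq V› fun _ _ ↦ Classical.propDecidable _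
  obtain ⟨σ, hσ⟩ := hne
  obtain ⟨hσG, hσcard⟩ := hS.isSimplex σ hσ
  obtain ⟨K, hK, hσK⟩ := hG.exists_facet σ hσG (by lia)
  obtain ⟨C, hCσ, hC, hpetal⟩ := hS.exists_flower_subset hG.isRelLowerSet hjk hcard hK hσ hσK
  refine ⟨K, C, hK, hG.mem_of_subset hσG hCσ (by lia), hC, hCσ.trans hσK, ?_⟩
  rintro P ⟨w, hw, rfl⟩ K' hK' hPK'
  refine (eq_of_subset_of_card_le (fun x hxK ↦ ?_) (by rw [hK.2, hK'.2])).symm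
  by_cases hxC : x ∈ C
  · exact hPK' (mem_insert_of_mem hxC)
  · have hx := hpetal x (mem_sdiff.2 ⟨hxK, hxC⟩)
    exact (hS.subset_of_card_le hG.isRelLowerSet hcard hK' (hpetal w hw) hPK' hx).1
      (mem_insert_self x C)

end Flowers

section Certificates

open Finset

/-- The graph on the `(k + 1)`-sets in which two sets are adjacent if they share a `(j + 1)`-set. -/
def simplexGraph (V : Type*) (k j : ℕ) : SimpleGraph (Finset V) where
  Adj K K' := K ≠ K' ∧ #K = k + 1 ∧ #K' = k + 1 ∧ j + 1 ≤ #(K ∩ K')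
  symm := ⟨fun K K' ⟨hne, hK, hK', hKK'⟩ ↦ ⟨hne.symm, hK', hK, inter_comm K K' ▸ hKK'⟩⟩
  loopless := ⟨fun _ h ↦ h.1 rfl⟩

variable {G : Set (Finset V)} {j k : ℕ} {S : Finset (Finset V)}

/-- A connected family of `k`-simplices of `G` covering `S`, of size at most `#S`. -/
structure IsCertificate (G : Set (Finset V)) (k j : ℕ) (S T : Finset (Finset V)) : Prop where
  connected : ((simplexGraph V k j).induce (T : Set (Finset V))).Connected
  isSimplex : ∀ K ∈ T, IsSimplex G k K
  card_le : #T ≤ #S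
  exists_subset : ∀ σ ∈ S, ∃ K ∈ T, σ ⊆ K

lemma connected_induce_singleton {α : Type*} (H : SimpleGraph α) (v : α) :
    (H.induce {v}).Connected :=
  SimpleGraph.Connected.of_subsingleton

lemma connected_induce_insert {α : Type*} {H : SimpleGraph α} {T : Set α} {v w : α}
    (hT : (H.induce T).Connected) (hv : v ∈ T) (hvw : H.Adj v w) :
    (H.induce (insert w T)).Connected := by
  rw [← Set.union_singleton]
  exact SimpleGraph.connected_induce_union hT.preconnected
    (connected_induce_singleton H w).preconnected hv (Set.mem_singleton w) hvw

lemma IsMinimalObstruction.exists_isCertificate [Finite V] (hS : IsMinimalObstruction G j S)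
    (hG : IsPure G k) (hj : 1 ≤ j) : ∃ T, IsCertificate G k j S T := by
  let covered (T : Finset (Finset V)) : Finset (Finset V) := {σ ∈ S | ∃ K ∈ T, σ ⊆ K}
  let IsPartial (T : Finset (Finset V)) : Prop :=
    ((simplexGraph V k j).induce (T : Set (Finset V))).Connected ∧ (∀ K ∈ T, IsSimplex G k K) ∧
      #T ≤ #(covered T)
  have hstart : ∃ T, IsPartial T := by
    obtain ⟨σ, hσ⟩ := hS.nonempty
    obtain ⟨hσG, hσcard⟩ := hS.isSimplex σ hσ
    obtain ⟨K, hK, hσK⟩ := hG.exists_facet σ hσG (by lia)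
    refine ⟨{K}, ?_, fun K' hK' ↦ mem_singleton.1 hK' ▸ hK, ?_⟩
    · rw [coe_singleton]
      exact connected_induce_singleton _ K
    · exact card_pos.2 ⟨σ, mem_filter.2 ⟨hσ, K, mem_singleton_self K, hσK⟩⟩
  obtain ⟨T, ⟨hconn, hT, hcard⟩, hmax⟩ :=
    exists_maximalFor_of_wellFoundedGT IsPartial covered hstart
  have hcovered : covered T = S := by
    by_contra hne
    have hTne : T.Nonempty := Set.nonempty_coe_sort.1 hconn.nonempty
    obtain ⟨K, hK, ⟨σ, hσ, hσK⟩, σ', hσ', hσ'K⟩ := hS.exists_simplex_crossing hG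
      ((filter_subset _ S).ssubset_of_ne hne) (card_pos.1 ((card_pos.2 hTne).trans_le hcard))
    obtain ⟨hσS, K₀, hK₀, hσK₀⟩ := mem_filter.1 hσ
    obtain ⟨hσ'S, hσ'_notMem⟩ := mem_sdiff.1 hσ'
    have hKT : K ∉ T := fun hKT ↦ hσ'_notMem (mem_filter.2 ⟨hσ'S, K, hKT, hσ'K⟩)
    have hadj : (simplexGraph V k j).Adj K₀ K :=
      ⟨fun h ↦ hKT (h ▸ hK₀), (hT K₀ hK₀).2, hK.2,
        (hS.isSimplex σ hσS).2 ▸ card_le_card (subset_inter hσK₀ hσK)⟩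
    have hsub : insert σ' (covered T) ⊆ covered (insert K T) :=
      insert_subset (mem_filter.2 ⟨hσ'S, K, mem_insert_self K T, hσ'K⟩)
        (monotone_filter_right S fun τ _ ⟨K', hK', hτ⟩ ↦ ⟨K', mem_insert_of_mem hK', hτ⟩)
    have hpartial : IsPartial (insert K T) := by
      refine ⟨by rw [coe_insert]; exact connected_induce_insert hconn hK₀ hadj,
        fun K' hK' ↦ (mem_insert.1 hK').elim (· ▸ hK) (hT K'), ?_⟩
      calc #(insert K T) = #T + 1 := card_insert_of_notMem hKT
        _ ≤ #(covered T) + 1 := by gcongr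
        _ = #(insert σ' (covered T)) := (card_insert_of_notMem hσ'_notMem).symm
        _ ≤ #(covered (insert K T)) := card_le_card hsub
    exact hσ'_notMem (hmax hpartial ((subset_insert _ _).trans hsub) (hsub (mem_insert_self _ _)))
  refine ⟨T, hconn, hT, hcovered ▸ hcard, fun σ hσ ↦ ?_⟩
  rw [← hcovered] at hσ
  exact (mem_filter.1 hσ).2

end Certificates

section BirthBox

open Finset

/-! ### Independent uniform birth times -/

variable {ι : Type*}

/-- The joint law of independent uniform `[0, 1]` variables indexed by `ι`; `birthMeasure n` is the
case `ι = Finset (Fin n)`. -/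
noncomputable def uniformCube (ι : Type*) [Fintype ι] : Measure (ι → ℝ) :=
  Measure.pi fun _ ↦ volume.restrict (Set.Icc (0 : ℝ) 1)

instance : IsProbabilityMeasure (volume.restrict (Set.Icc (0 : ℝ) 1)) := ⟨by simp⟩

instance [Fintype ι] : IsProbabilityMeasure (uniformCube ι) := by
  unfold uniformCube
  infer_instance

instance (n : ℕ) : IsProbabilityMeasure (birthMeasure n) :=
  inferInstanceAs (IsProbabilityMeasure (uniformCube _))

/-- The event that all members of `A` are born by time `x` and no member of `B` by time `y`. -/
def birthBox (A B : Finset ι) (x y : ℝ) : Set (ι → ℝ) :=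
  {t | (∀ i ∈ A, t i ≤ x) ∧ ∀ i ∈ B, y < t i}

lemma birthBox_eq_pi {A B : Finset ι} (hAB : Disjoint A B) (x y : ℝ) :
    birthBox A B x y = Set.univ.pi fun i ↦
      if i ∈ A then Set.Iic x else if i ∈ B then Set.Ioi y else Set.univ := by
  ext t
  rw [Set.mem_univ_pi]
  refine ⟨fun ⟨hA, hB⟩ i ↦ ?_, fun h ↦ ⟨fun i hi ↦ by simpa [hi] using h i, fun i hi ↦ ?_⟩⟩
  · split_ifs with hiA hiB
    exacts [hA i hiA, hB i hiB, Set.mem_univ _]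
  · simpa [hi, disjoint_right.1 hAB hi] using h i

lemma measurableSet_birthBox [Countable ι] {A B : Finset ι} (hAB : Disjoint A B) (x y : ℝ) :
    MeasurableSet (birthBox A B x y) := by
  rw [birthBox_eq_pi hAB]
  refine MeasurableSet.univ_pi fun i ↦ ?_
  split_ifs
  exacts [measurableSet_Iic, measurableSet_Ioi, MeasurableSet.univ]

lemma volume_restrict_Icc_Iic {x : ℝ} (hx : x ≤ 1) :
    volume.restrict (Set.Icc (0 : ℝ) 1) (Set.Iic x) = ENNReal.ofReal x := by
  have hset : Set.Iic x ∩ Set.Icc (0 : ℝ) 1 = Set.Icc 0 x := by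
    ext z
    exact ⟨fun hz ↦ ⟨hz.2.1, hz.1⟩, fun hz ↦ ⟨hz.2, hz.1, hz.2.trans hx⟩⟩
  rw [Measure.restrict_apply measurableSet_Iic, hset, Real.volume_Icc, sub_zero]

lemma volume_restrict_Icc_Ioi {x : ℝ} (hx : 0 ≤ x) :
    volume.restrict (Set.Icc (0 : ℝ) 1) (Set.Ioi x) = ENNReal.ofReal (1 - x) := by
  have hset : Set.Ioi x ∩ Set.Icc (0 : ℝ) 1 = Set.Ioc x 1 := by
    ext z
    exact ⟨fun hz ↦ ⟨hz.1, hz.2.2⟩, fun hz ↦ ⟨hz.1, hx.trans hz.1.le, hz.2⟩⟩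
  rw [Measure.restrict_apply measurableSet_Ioi, hset, Real.volume_Ioc]

lemma uniformCube_real_birthBox [Fintype ι] {A B : Finset ι} (hAB : Disjoint A B) {x y : ℝ}
    (hx : x ∈ Set.Icc (0 : ℝ) 1) (hy : y ∈ Set.Icc (0 : ℝ) 1) :
    (uniformCube ι).real (birthBox A B x y) = x ^ #A * (1 - y) ^ #B := by
  have hfactor (i : ι) : (volume.restrict (Set.Icc (0 : ℝ) 1))
      (if i ∈ A then Set.Iic x else if i ∈ B then Set.Ioi y else Set.univ) =
      ENNReal.ofReal ((if i ∈ A then x else 1) * if i ∈ B then 1 - y else 1) := by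
    by_cases hiA : i ∈ A
    · simp [hiA, disjoint_left.1 hAB hiA, volume_restrict_Icc_Iic hx.2]
    · by_cases hiB : i ∈ B
      · simp [hiA, hiB, volume_restrict_Icc_Ioi hy.1]
      · simp [hiA, hiB]
  have hnonneg (i : ι) : 0 ≤ (if i ∈ A then x else 1) * if i ∈ B then 1 - y else 1 := by
    have := hx.1
    have := sub_nonneg.2 hy.2
    positivity
  rw [measureReal_def, birthBox_eq_pi hAB, uniformCube, Measure.pi_pi,
    prod_congr rfl fun i _ ↦ hfactor i, ← ENNReal.ofReal_prod_of_nonneg fun i _ ↦ hnonneg i,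
    ENNReal.toReal_ofReal (prod_nonneg fun i _ ↦ hnonneg i), prod_mul_distrib]
  simp [prod_ite_mem]

end BirthBox

section ConnectedSets

open Finset

/-! ### Counting connected vertex sets -/

variable {α : Type*} {H : SimpleGraph α} {T U : Finset α} {v : α}

lemma exists_adj_of_connected_induce (hT : (H.induce (T : Set α)).Connected) (hvT : v ∈ T)
    (hvU : v ∈ U) (hTU : ¬ T ⊆ U) : ∃ a ∈ U, ∃ b ∈ T \ U, H.Adj a b := by
  obtain ⟨x, hxT, hxU⟩ := not_subset.1 hTU
  obtain ⟨p⟩ := hT.preconnected ⟨v, hvT⟩ ⟨x, hxT⟩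
  obtain ⟨d, -, hfst, hsnd⟩ := p.exists_boundary_dart {a | a.1 ∈ U} hvU hxU
  exact ⟨d.fst, hfst, d.snd, mem_sdiff.2 ⟨d.snd.2, hsnd⟩, d.adj⟩

variable [Fintype α]

/-- The vertices outside `T` with a neighbour in `T`. -/
noncomputable def outerBoundary (H : SimpleGraph α) (T : Finset α) : Finset α :=
  T.biUnion (H.neighborFinset ·) \ T

lemma disjoint_erase_outerBoundary (H : SimpleGraph α) (T : Finset α) (v : α) :
    Disjoint (T.erase v) (outerBoundary H T) :=
  disjoint_of_subset_left (erase_subset v T) disjoint_sdiff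

lemma card_outerBoundary_le {D : ℕ} (hD : ∀ a, H.degree a ≤ D) (T : Finset α) :
    #(outerBoundary H T) ≤ D * #T := by
  calc #(outerBoundary H T) ≤ #(T.biUnion (H.neighborFinset ·)) := card_le_card sdiff_subset
    _ ≤ #T * D := card_biUnion_le_card_mul _ _ _ fun a _ ↦ hD a
    _ = D * #T := mul_comm _ _

/-- The connected vertex sets of size `m` containing the root `v`. -/
noncomputable def connectedSets (H : SimpleGraph α) (v : α) (m : ℕ) : Finset (Finset α) :=
  {T | v ∈ T ∧ (H.induce (T : Set α)).Connected ∧ #T = m}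

@[simp]
lemma mem_connectedSets {m : ℕ} :
    T ∈ connectedSets H v m ↔ v ∈ T ∧ (H.induce (T : Set α)).Connected ∧ #T = m := by
  simp [connectedSets]

lemma subset_of_mem_birthBox_outerBoundary (hT : (H.induce (T : Set α)).Connected) (hvT : v ∈ T)
    (hvU : v ∈ U) {q : ℝ} {t : α → ℝ} (htT : t ∈ birthBox (T.erase v) (outerBoundary H T) q q)
    (htU : t ∈ birthBox (U.erase v) (outerBoundary H U) q q) : T ⊆ U := by
  by_contra hTU
  obtain ⟨a, ha, b, hb, hab⟩ := exists_adj_of_connected_induce hT hvT hvU hTU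
  obtain ⟨hbT, hbU⟩ := mem_sdiff.1 hb
  have hbv : b ≠ v := by rintro rfl; exact hbU hvU
  have hborn := htT.1 b (mem_erase.2 ⟨hbv, hbT⟩)
  have hunborn := htU.2 b
    (mem_sdiff.2 ⟨mem_biUnion.2 ⟨a, ha, (H.mem_neighborFinset a b).2 hab⟩, hbU⟩)
  exact hborn.not_gt hunborn

/- In site percolation the events that the cluster of `v` is `T` are disjoint; with retention
probability `1 / (2 * D)` each of them has probability at least the inverse of the bound. -/
lemma card_connectedSets_le {D : ℕ} (hD : ∀ a, H.degree a ≤ D) (hD₀ : 0 < D) (v : α) (m : ℕ) :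
    (#(connectedSets H v m) : ℝ) ≤ (2 * D) ^ (m - 1) * 2 ^ m := by
  have hD₁ : (1 : ℝ) ≤ D := by exact_mod_cast hD₀
  let q : ℝ := (2 * D : ℝ)⁻¹
  have hq₀ : 0 < q := by positivity
  have hq₁ : q ≤ 2⁻¹ := inv_anti₀ two_pos (by linarith)
  have hq : q ∈ Set.Icc (0 : ℝ) 1 := ⟨hq₀.le, by linarith⟩
  let event (T : Finset α) : Set (α → ℝ) := birthBox (T.erase v) (outerBoundary H T) q q
  have hsum : ∑ T ∈ connectedSets H v m, (uniformCube α).real (event T) ≤ 1 := by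
    rw [← measureReal_biUnion_finset]
    · exact measureReal_le_one
    · intro T hT U hU hne
      obtain ⟨hvT, hTconn, -⟩ := mem_connectedSets.1 hT
      obtain ⟨hvU, hUconn, -⟩ := mem_connectedSets.1 hU
      exact Set.disjoint_left.2 fun t htT htU ↦ hne <|
        (subset_of_mem_birthBox_outerBoundary hTconn hvT hvU htT htU).antisymm
          (subset_of_mem_birthBox_outerBoundary hUconn hvU hvT htU htT)
    · exact fun T _ ↦ measurableSet_birthBox (disjoint_erase_outerBoundary H T v) q q
  have hbernoulli : (2⁻¹ : ℝ) ≤ (1 - q) ^ D := by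
    calc (2⁻¹ : ℝ) = 1 + D * -q := by simp only [q]; field_simp; norm_num
      _ ≤ (1 + -q) ^ D := one_add_mul_le_pow (by linarith) D
      _ = (1 - q) ^ D := by rw [sub_eq_add_neg]
  have hevent : ∀ T ∈ connectedSets H v m,
      q ^ (m - 1) * 2⁻¹ ^ m ≤ (uniformCube α).real (event T) := by
    intro T hT
    obtain ⟨hvT, -, rfl⟩ := mem_connectedSets.1 hT
    calc q ^ (#T - 1) * 2⁻¹ ^ #T ≤ q ^ (#T - 1) * ((1 - q) ^ D) ^ #T := by gcongr
      _ ≤ q ^ (#T - 1) * (1 - q) ^ #(outerBoundary H T) := by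
        rw [← pow_mul]
        exact mul_le_mul_of_nonneg_left (pow_le_pow_of_le_one (sub_nonneg.2 hq.2) (by linarith)
          (card_outerBoundary_le hD T)) (by positivity)
      _ = (uniformCube α).real (event T) := by
        rw [uniformCube_real_birthBox (disjoint_erase_outerBoundary H T v) hq hq,
          card_erase_of_mem hvT]
  have hcount : #(connectedSets H v m) * (q ^ (m - 1) * 2⁻¹ ^ m) ≤ 1 := by
    rw [← nsmul_eq_mul, ← sum_const]
    exact (sum_le_sum hevent).trans hsum
  rwa [inv_pow, inv_pow, ← mul_inv, ← div_eq_mul_inv, div_le_one (by positivity)] at hcount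

lemma degree_simplexGraph_le [Fintype V] {k j : ℕ} (K : Finset V) :
    (simplexGraph V k j).degree K ≤ (k + 1).choose (j + 1) * Fintype.card V ^ (k - j) := by
  by_cases hK : #K = k + 1
  swap
  · have hempty : (simplexGraph V k j).neighborFinset K = ∅ :=
      eq_empty_of_forall_notMem fun K' hK' ↦ hK ((SimpleGraph.mem_neighborFinset _ _ _).1 hK').2.1
    rw [← SimpleGraph.card_neighborFinset_eq_degree, hempty, card_empty]
    exact Nat.zero_le _
  have hsub : (simplexGraph V k j).neighborFinset K ⊆ (K.powersetCard (j + 1)).biUnion fun ρ ↦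
      {K' ∈ univ.powersetCard (k + 1) | ρ ⊆ K'} := by
    intro K' hK'
    obtain ⟨-, -, hK'card, hle⟩ := (SimpleGraph.mem_neighborFinset _ _ _).1 hK'
    obtain ⟨ρ, hρ, hρcard⟩ := exists_subset_card_eq hle
    exact mem_biUnion.2 ⟨ρ, mem_powersetCard.2 ⟨hρ.trans inter_subset_left, hρcard⟩,
      mem_filter.2 ⟨mem_powersetCard.2 ⟨subset_univ _, hK'card⟩, hρ.trans inter_subset_right⟩⟩
  calc (simplexGraph V k j).degree K ≤ _ := card_le_card hsub
    _ ≤ #(K.powersetCard (j + 1)) * Fintype.card V ^ (k - j) := by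
      refine card_biUnion_le_card_mul _ _ _ fun ρ hρ ↦ ?_
      obtain ⟨hρK, hρcard⟩ := mem_powersetCard.1 hρ
      have hρk : #ρ ≤ k + 1 := hK ▸ card_le_card hρK
      rw [card_filter_powersetCard_subset _ _ _ (subset_univ ρ) hρk, hρcard, card_univ,
        Nat.add_sub_add_right]
      exact (Nat.choose_le_pow _ _).trans (Nat.pow_le_pow_left (Nat.sub_le _ _) _)
    _ = (k + 1).choose (j + 1) * Fintype.card V ^ (k - j) := by rw [card_powersetCard, hK]

end ConnectedSets

section ForbiddenSimplices

open Finset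

/-! ### Facets forbidden by a cocycle -/

variable [Fintype V] {j k : ℕ} {S : Finset (Finset V)} {U : Finset V}

lemma card_mul_choose_le_card_inter_mem (hjk : j ≤ k) (hS : ∀ σ ∈ S, σ ⊆ U ∧ #σ = j + 1) :
    #S * (Fintype.card V - #U).choose (k - j) ≤
      #{K ∈ (univ : Finset V).powersetCard (k + 1) | K ∩ U ∈ S} := by
  have hinter {σ W : Finset V} (hσ : σ ∈ S) (hW : W ⊆ Uᶜ) : (σ ∪ W) ∩ U = σ := by
    rw [union_inter_distrib_right, inter_eq_left.2 (hS σ hσ).1,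
      disjoint_iff_inter_eq_empty.1 (subset_compl_iff_disjoint_right.1 hW), union_empty]
  have hdisj {σ W : Finset V} (hσ : σ ∈ S) (hW : W ⊆ Uᶜ) : Disjoint σ W :=
    (subset_compl_iff_disjoint_left.1 hW).mono_left (hS σ hσ).1
  rw [← card_compl, ← card_powersetCard, ← card_product]
  refine card_le_card_of_injOn (fun x ↦ x.1 ∪ x.2) ?_ ?_
  · rintro ⟨σ, W⟩ hx
    obtain ⟨hσ, hW⟩ := mem_product.1 hx
    obtain ⟨hWU, hWcard⟩ := mem_powersetCard.1 hW
    refine mem_filter.2 ⟨mem_powersetCard.2 ⟨subset_univ _, ?_⟩, (hinter hσ hWU).symm ▸ hσ⟩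
    rw [card_union_of_disjoint (hdisj hσ hWU), (hS σ hσ).2, hWcard]
    lia
  · rintro ⟨σ, W⟩ hx ⟨σ', W'⟩ hx' heq
    obtain ⟨hσ, hW⟩ := mem_product.1 hx
    obtain ⟨hσ', hW'⟩ := mem_product.1 hx'
    replace hW := (mem_powersetCard.1 hW).1
    replace hW' := (mem_powersetCard.1 hW').1
    dsimp only at hσ hσ' hW hW' heq
    obtain rfl : σ = σ' := by rw [← hinter hσ hW, heq, hinter hσ' hW']
    rw [← union_sdiff_cancel_left (hdisj hσ hW), heq, union_sdiff_cancel_left (hdisj hσ hW')]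

/-- The `(k + 1)`-sets that cannot be present if `S` is the support of a `j`-cocycle: those
containing a `(j + 2)`-set with an odd number of faces in `S`. -/
noncomputable def forbiddenFacets (k j : ℕ) (S : Finset (Finset V)) : Finset (Finset V) :=
  {K ∈ univ.powersetCard (k + 1) | ∃ R ∈ oddCofaces j S, R ⊆ K}

lemma IsCocycleSupport.notMem_forbiddenFacets {G : Set (Finset V)} {K : Finset V}
    (hS : IsCocycleSupport G j S) (hG : IsRelLowerSet G Finset.Nonempty) (hK : K ∈ G) :
    K ∉ forbiddenFacets k j S := by
  intro hforb
  obtain ⟨R, hR, hRK⟩ := (mem_filter.1 hforb).2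
  obtain ⟨hRmem, hodd⟩ := mem_filter.1 hR
  have hRcard := (mem_powersetCard.1 hRmem).2
  have hRG : R ∈ G := hG.mem_of_le hK hRK (card_pos.1 (by lia))
  exact Nat.not_even_iff_odd.2 hodd (hS.even_card R hRG hRcard)

lemma card_mul_choose_le_card_forbiddenFacets (hjk : j < k) (hS : ∀ σ ∈ S, #σ = j + 1) :
    #S * (Fintype.card V - (j + 1) * #S).choose (k - j) ≤ #(forbiddenFacets k j S) := by
  let U := S.biUnion id
  have hUcard : #U ≤ (j + 1) * #S := by
    rw [mul_comm]
    exact card_biUnion_le_card_mul _ _ _ fun σ hσ ↦ (hS σ hσ).le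
  have hSU : ∀ σ ∈ S, σ ⊆ U := fun σ hσ ↦ subset_biUnion_of_mem id hσ
  have hforb : ∀ K ∈ (univ : Finset V).powersetCard (k + 1), K ∩ U ∈ S →
      K ∈ forbiddenFacets k j S := by
    intro K hK hKU
    have hKcard := (mem_powersetCard.1 hK).2
    have hKUcard := hS _ hKU
    obtain ⟨w, hwK, hwKU⟩ := exists_mem_notMem_of_card_lt_card (show #(K ∩ U) < #K by lia)
    have hwU : w ∉ U := fun hwU ↦ hwKU (mem_inter.2 ⟨hwK, hwU⟩)
    have hfaces : {σ ∈ S | σ ⊆ insert w (K ∩ U)} = {K ∩ U} := by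
      refine eq_singleton_iff_unique_mem.2
        ⟨mem_filter.2 ⟨hKU, subset_insert w _⟩, fun σ hσ ↦ ?_⟩
      obtain ⟨hσS, hσ_sub⟩ := mem_filter.1 hσ
      have hwσ : w ∉ σ := fun h ↦ hwU (hSU σ hσS h)
      exact eq_of_subset_of_card_le ((subset_insert_iff_of_notMem hwσ).1 hσ_sub)
        (by rw [hKUcard, hS σ hσS])
    refine mem_filter.2 ⟨hK, insert w (K ∩ U), mem_filter.2 ⟨mem_powersetCard.2
      ⟨subset_univ _, by rw [card_insert_of_notMem hwKU, hKUcard]⟩, ?_⟩,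
      insert_subset hwK inter_subset_left⟩
    rw [hfaces, card_singleton]
    exact odd_one
  calc #S * (Fintype.card V - (j + 1) * #S).choose (k - j)
      ≤ #S * (Fintype.card V - #U).choose (k - j) := by gcongr
    _ ≤ #{K ∈ (univ : Finset V).powersetCard (k + 1) | K ∩ U ∈ S} :=
        card_mul_choose_le_card_inter_mem hjk.le fun σ hσ ↦ ⟨hSU σ hσ, hS σ hσ⟩
    _ ≤ #(forbiddenFacets k j S) :=
        card_le_card fun K hK ↦ hforb K (mem_filter.1 hK).1 (mem_filter.1 hK).2

lemma card_oddCofaces_mul_choose_le (hjk : j < k) (S : Finset (Finset V)) :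
    #(oddCofaces j S) * (Fintype.card V - (j + 2)).choose (k - j - 1) ≤
      #(forbiddenFacets k j S) * (k + 1).choose (j + 2) := by
  refine card_mul_le_card_mul (fun R K ↦ R ⊆ K) (fun R hR ↦ ?_) (fun K hK ↦ ?_)
  · have hRcard : #R = j + 2 := (mem_powersetCard.1 (mem_filter.1 hR).1).2
    have hle := card_mul_choose_le_card_inter_mem (j := j + 1) (k := k) (S := {R}) (U := R)
      (by lia) (by simp [hRcard])
    rw [card_singleton, one_mul, hRcard, ← Nat.sub_sub] at hle
    refine hle.trans (card_le_card fun K hK ↦ ?_)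
    obtain ⟨hK, hKR⟩ := mem_filter.1 hK
    replace hKR := inter_eq_right.1 (mem_singleton.1 hKR)
    exact (mem_bipartiteAbove _).2 ⟨mem_filter.2 ⟨hK, R, hR, hKR⟩, hKR⟩
  · rw [← (mem_powersetCard.1 (mem_filter.1 hK).1).2, ← card_powersetCard]
    refine card_le_card fun R hR ↦ ?_
    obtain ⟨hR, hRK⟩ := (mem_bipartiteBelow _).1 hR
    exact mem_powersetCard.2 ⟨hRK, (mem_powersetCard.1 (mem_filter.1 hR).1).2⟩

end ForbiddenSimplices

section FirstMoment

open Finset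

/-! ### First moment bound for minimal obstructions -/

lemma measureReal_le_sum_of_subset_biUnion {Ω ι : Type*} [MeasurableSpace Ω] {μ : Measure Ω}
    [IsFiniteMeasure μ] {I : Finset ι} {A : Set Ω} {B : ι → Set Ω} (h : A ⊆ ⋃ i ∈ I, B i) :
    μ.real A ≤ ∑ i ∈ I, μ.real (B i) :=
  (measureReal_mono h (measure_ne_top _ _)).trans (measureReal_biUnion_finset_le _ _)

lemma one_sub_pow_le_exp {p : ℝ} (hp : p ≤ 1) (h : ℕ) : (1 - p) ^ h ≤ Real.exp (-(p * h)) := by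
  calc (1 - p) ^ h ≤ Real.exp (-p) ^ h :=
        pow_le_pow_left₀ (sub_nonneg.2 hp) (Real.one_sub_le_exp_neg p) h
    _ = Real.exp (-(p * h)) := by rw [← Real.exp_nat_mul]; ring_nf

lemma uniformCube_real_birthBox_le_exp {ι : Type*} [Fintype ι] {A B : Finset ι}
    (hAB : Disjoint A B) {x y : ℝ} (hx : x ∈ Set.Icc (0 : ℝ) 1) (hy : y ∈ Set.Icc (0 : ℝ) 1)
    {h : ℕ} (hB : h ≤ #B) :
    (uniformCube ι).real (birthBox A B x y) ≤ x ^ #A * Real.exp (-(y * h)) := by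
  have hx₀ := hx.1
  have hyB : y * h ≤ y * #B := mul_le_mul_of_nonneg_left (Nat.cast_le.2 hB) hy.1
  rw [uniformCube_real_birthBox hAB hx hy]
  gcongr
  exact (one_sub_pow_le_exp hy.2 _).trans (Real.exp_le_exp.2 (neg_le_neg hyB))

lemma sum_card_connectedSets_mul_pow_le {α : Type*} [Fintype α] {H : SimpleGraph α} {D : ℕ}
    (hD : ∀ a, H.degree a ≤ D) {y : ℝ} (hy : 0 ≤ y) (hDy : 1 ≤ 4 * D * y) (v : α) (s : ℕ) :
    ∑ m ∈ Icc 1 s, #(connectedSets H v m) * y ^ m ≤ 2 * y * (8 * D * y) ^ s := by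
  have hD₀ : 0 < D := by
    rw [pos_iff_ne_zero]
    rintro rfl
    norm_num at hDy
  have hterm : ∀ m ∈ Icc 1 s, #(connectedSets H v m) * y ^ m ≤ 2 * y * (4 * D * y) ^ s := by
    intro m hm
    obtain ⟨hm₁, hms⟩ := mem_Icc.1 hm
    obtain ⟨l, rfl⟩ := Nat.exists_eq_add_of_le' hm₁
    calc #(connectedSets H v (l + 1)) * y ^ (l + 1)
        ≤ (2 * D) ^ l * 2 ^ (l + 1) * y ^ (l + 1) := by
          gcongr
          exact card_connectedSets_le hD hD₀ v (l + 1)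
      _ = 2 * y * ((2 * D) ^ l * 2 ^ l * y ^ l) := by ring
      _ = 2 * y * (4 * D * y) ^ l := by rw [← mul_pow, ← mul_pow]; ring
      _ ≤ 2 * y * (4 * D * y) ^ s := by
          gcongr
          lia
  calc ∑ m ∈ Icc 1 s, #(connectedSets H v m) * y ^ m ≤ s * (2 * y * (4 * D * y) ^ s) := by
        simpa using sum_le_sum hterm
    _ ≤ 2 ^ s * (2 * y * (4 * D * y) ^ s) := by
        gcongr
        exact_mod_cast Nat.lt_two_pow_self.le
    _ = 2 * y * (2 * (4 * D * y)) ^ s := by rw [mul_pow 2]; ring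
    _ = 2 * y * (8 * D * y) ^ s := by ring

variable [Fintype V] {k j s h : ℕ} {p₀ p₁ : ℝ} {T : Finset (Finset V)}

/-- The event that `T` is present at time `p₁` while, for some set `S` of `j`-faces of `T` with at
least `h` forbidden facets, none of these facets is present at time `p₀`. -/
def certificateEvent (k j : ℕ) (p₀ p₁ : ℝ) (h : ℕ) (T : Finset (Finset V)) :
    Set (Finset V → ℝ) :=
  {t | ∃ S ⊆ T.biUnion (powersetCard (j + 1)), Disjoint T (forbiddenFacets k j S) ∧
    h ≤ #(forbiddenFacets k j S) ∧ t ∈ birthBox T (forbiddenFacets k j S) p₁ p₀}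

lemma uniformCube_real_certificateEvent_le (hT : ∀ K ∈ T, #K = k + 1)
    (hp₀ : p₀ ∈ Set.Icc (0 : ℝ) 1) (hp₁ : p₁ ∈ Set.Icc (0 : ℝ) 1) :
    (uniformCube (Finset V)).real (certificateEvent k j p₀ p₁ h T) ≤
      (2 ^ (k + 1).choose (j + 1) * p₁) ^ #T * Real.exp (-(p₀ * h)) := by
  let candidates : Finset (Finset (Finset V)) :=
    {S ∈ (T.biUnion (powersetCard (j + 1))).powerset |
      Disjoint T (forbiddenFacets k j S) ∧ h ≤ #(forbiddenFacets k j S)}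
  have hfaces : #(T.biUnion (powersetCard (j + 1))) ≤ (k + 1).choose (j + 1) * #T := by
    rw [mul_comm]
    exact card_biUnion_le_card_mul _ _ _ fun K hK ↦ by rw [card_powersetCard, hT K hK]
  have hcandidates : #candidates ≤ (2 ^ (k + 1).choose (j + 1)) ^ #T := by
    calc #candidates ≤ 2 ^ #(T.biUnion (powersetCard (j + 1))) :=
          (card_filter_le _ _).trans (card_powerset _).le
      _ ≤ 2 ^ ((k + 1).choose (j + 1) * #T) := Nat.pow_le_pow_right two_pos hfaces
      _ = (2 ^ (k + 1).choose (j + 1)) ^ #T := pow_mul ..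
  have hsub : certificateEvent k j p₀ p₁ h T ⊆
      ⋃ S ∈ candidates, birthBox T (forbiddenFacets k j S) p₁ p₀ := by
    rintro t ⟨S, hS, hdisj, hcard, ht⟩
    exact Set.mem_biUnion (mem_filter.2 ⟨mem_powerset.2 hS, hdisj, hcard⟩) ht
  have hp₁₀ := hp₁.1
  calc (uniformCube (Finset V)).real (certificateEvent k j p₀ p₁ h T)
      ≤ ∑ S ∈ candidates, (uniformCube (Finset V)).real
          (birthBox T (forbiddenFacets k j S) p₁ p₀) :=
        measureReal_le_sum_of_subset_biUnion hsub
    _ ≤ ∑ _ ∈ candidates, p₁ ^ #T * Real.exp (-(p₀ * h)) := by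
        refine sum_le_sum fun _ hS ↦ ?_
        obtain ⟨hdisj, hcard⟩ := (mem_filter.1 hS).2
        exact uniformCube_real_birthBox_le_exp hdisj hp₁ hp₀ hcard
    _ = #candidates * (p₁ ^ #T * Real.exp (-(p₀ * h))) := by rw [sum_const, nsmul_eq_mul]
    _ ≤ (2 ^ (k + 1).choose (j + 1)) ^ #T * (p₁ ^ #T * Real.exp (-(p₀ * h))) := by
        gcongr
        exact_mod_cast hcandidates
    _ = (2 ^ (k + 1).choose (j + 1) * p₁) ^ #T * Real.exp (-(p₀ * h)) := by
        rw [mul_pow, mul_assoc]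

/-- The event that some certificate with at most `s` members has at least `h` forbidden facets. It
contains the event that at some time `p ∈ [p₀, p₁]` there is a minimal obstruction of size `s` with
at least `h` forbidden facets. -/
def obstructionEvent (V : Type*) [Fintype V] (k j : ℕ) (p₀ p₁ : ℝ) (s h : ℕ) :
    Set (Finset V → ℝ) :=
  {t | ∃ T : Finset (Finset V), ((simplexGraph V k j).induce (T : Set (Finset V))).Connected ∧
    (∀ K ∈ T, #K = k + 1) ∧ #T ≤ s ∧ t ∈ certificateEvent k j p₀ p₁ h T}

lemma IsMinimalObstruction.mem_obstructionEvent {G : Set (Finset V)} {t : Finset V → ℝ} {p : ℝ}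
    {S : Finset (Finset V)} (hS : IsMinimalObstruction G j S) (hG : IsPure G k)
    (ht : ∀ K, IsSimplex G k K ↔ #K = k + 1 ∧ t K ≤ p) (hj : 1 ≤ j) (hp : p ∈ Set.Icc p₀ p₁)
    (hh : h ≤ #(forbiddenFacets k j S)) : t ∈ obstructionEvent V k j p₀ p₁ #S h := by
  obtain ⟨T, hT⟩ := hS.exists_isCertificate hG hj
  have hTborn : ∀ K ∈ T, #K = k + 1 ∧ t K ≤ p :=
    fun K hK ↦ (ht K).1 (hT.isSimplex K hK)
  have hforb : ∀ K ∈ forbiddenFacets k j S, p < t K := by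
    intro K hK
    by_contra! htK
    have hKcard := (mem_powersetCard.1 (mem_filter.1 hK).1).2
    exact hS.notMem_forbiddenFacets hG.isRelLowerSet
      ((ht K).2 ⟨hKcard, htK⟩).1 hK
  refine ⟨T, hT.connected, fun K hK ↦ (hTborn K hK).1, hT.card_le, S, ?_, ?_, hh,
    fun K hK ↦ (hTborn K hK).2.trans hp.2, fun K hK ↦ hp.1.trans_lt (hforb K hK)⟩
  · intro σ hσ
    obtain ⟨K, hK, hσK⟩ := hT.exists_subset σ hσ
    exact mem_biUnion.2 ⟨K, hK, mem_powersetCard.2 ⟨hσK, (hS.isSimplex σ hσ).2⟩⟩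
  · exact disjoint_left.2 fun K hK hKforb ↦ (hforb K hKforb).not_ge (hTborn K hK).2

/-- The possible certificates with `m` members containing `K₀`. -/
noncomputable def rootedCertificates (k j : ℕ) (K₀ : Finset V) (m : ℕ) :
    Finset (Finset (Finset V)) :=
  {T ∈ connectedSets (simplexGraph V k j) K₀ m | ∀ K ∈ T, #K = k + 1}

lemma uniformCube_real_biUnion_rootedCertificates_le (hp₀ : p₀ ∈ Set.Icc (0 : ℝ) 1)
    (hp₁ : p₁ ∈ Set.Icc (0 : ℝ) 1) (K₀ : Finset V) (m : ℕ) :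
    (uniformCube (Finset V)).real
        (⋃ T ∈ rootedCertificates k j K₀ m, certificateEvent k j p₀ p₁ h T) ≤
      #(connectedSets (simplexGraph V k j) K₀ m) * (2 ^ (k + 1).choose (j + 1) * p₁) ^ m *
        Real.exp (-(p₀ * h)) := by
  have hp₁₀ := hp₁.1
  calc _ ≤ ∑ T ∈ rootedCertificates k j K₀ m,
          (uniformCube (Finset V)).real (certificateEvent k j p₀ p₁ h T) :=
        measureReal_biUnion_finset_le _ _
    _ ≤ ∑ _ ∈ rootedCertificates k j K₀ m,
          (2 ^ (k + 1).choose (j + 1) * p₁) ^ m * Real.exp (-(p₀ * h)) := by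
        refine sum_le_sum fun T hT ↦ ?_
        obtain ⟨hTconn, hTcard⟩ := mem_filter.1 hT
        obtain ⟨-, -, rfl⟩ := mem_connectedSets.1 hTconn
        exact uniformCube_real_certificateEvent_le hTcard hp₀ hp₁
    _ ≤ _ := by
        rw [sum_const, nsmul_eq_mul, mul_assoc]
        gcongr
        exact filter_subset _ _

lemma obstructionEvent_subset : obstructionEvent V k j p₀ p₁ s h ⊆
    ⋃ K₀ ∈ univ.powersetCard (k + 1), ⋃ m ∈ Icc 1 s, ⋃ T ∈ rootedCertificates k j K₀ m,
      certificateEvent k j p₀ p₁ h T := by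
  rintro t ⟨T, hconn, hT, hTs, ht⟩
  obtain ⟨⟨K₀, hK₀⟩⟩ := hconn.nonempty
  have hroot : T ∈ rootedCertificates k j K₀ #T :=
    mem_filter.2 ⟨mem_connectedSets.2 ⟨hK₀, hconn, rfl⟩, hT⟩
  have hTcard : #T ∈ Icc 1 s := mem_Icc.2 ⟨card_pos.2 ⟨K₀, hK₀⟩, hTs⟩
  simp only [Set.mem_iUnion]
  exact ⟨K₀, mem_powersetCard.2 ⟨subset_univ _, hT K₀ hK₀⟩, #T, hTcard, T, hroot, ht⟩

lemma uniformCube_real_obstructionEvent_le (hp₀ : p₀ ∈ Set.Icc (0 : ℝ) 1)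
    (hp₁ : p₁ ∈ Set.Icc (0 : ℝ) 1) {D : ℕ} {y : ℝ}
    (hD : D = (k + 1).choose (j + 1) * Fintype.card V ^ (k - j))
    (hy : y = 2 ^ (k + 1).choose (j + 1) * p₁) (hDy : 1 ≤ 4 * D * y) (s h : ℕ) :
    (uniformCube (Finset V)).real (obstructionEvent V k j p₀ p₁ s h) ≤
      (Fintype.card V).choose (k + 1) * (2 * y * (8 * D * y) ^ s * Real.exp (-(p₀ * h))) := by
  have hy₀ : 0 ≤ y := hy ▸ mul_nonneg (by positivity) hp₁.1
  have hroot (K₀ : Finset V) : (uniformCube (Finset V)).real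
      (⋃ m ∈ Icc 1 s, ⋃ T ∈ rootedCertificates k j K₀ m, certificateEvent k j p₀ p₁ h T) ≤
        2 * y * (8 * D * y) ^ s * Real.exp (-(p₀ * h)) := by
    calc _ ≤ ∑ m ∈ Icc 1 s,
            #(connectedSets (simplexGraph V k j) K₀ m) * y ^ m * Real.exp (-(p₀ * h)) :=
          (measureReal_biUnion_finset_le _ _).trans <| sum_le_sum fun m _ ↦
            hy ▸ uniformCube_real_biUnion_rootedCertificates_le hp₀ hp₁ K₀ m
      _ ≤ _ := by
          rw [← sum_mul]
          gcongr
          exact sum_card_connectedSets_mul_pow_le (fun K ↦ hD ▸ degree_simplexGraph_le K) hy₀ hDy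
            K₀ s
  calc _ ≤ ∑ K₀ ∈ univ.powersetCard (k + 1), (uniformCube (Finset V)).real
          (⋃ m ∈ Icc 1 s, ⋃ T ∈ rootedCertificates k j K₀ m, certificateEvent k j p₀ p₁ h T) :=
        measureReal_le_sum_of_subset_biUnion obstructionEvent_subset
    _ ≤ _ := (sum_le_sum fun K₀ _ ↦ hroot K₀).trans_eq <| by
        rw [sum_const, nsmul_eq_mul, card_powersetCard, card_univ]

end FirstMoment

section WithHighProbability

/-- The property `E` of birth times holds with high probability. Since `E` need not be measurable,
this is expressed by the outer measure of its complement tending to `0`, which is the stronger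
requirement. -/
def Whp (E : ∀ n : ℕ, (Finset (Fin n) → ℝ) → Prop) : Prop :=
  Tendsto (fun n ↦ (birthMeasure n).real {t | ¬ E n t}) atTop (nhds 0)

namespace Whp

variable {E F : ∀ n : ℕ, (Finset (Fin n) → ℝ) → Prop}

lemma of_le {f : ℕ → ℝ} (hf : Tendsto f atTop (nhds 0))
    (h : ∀ᶠ n in atTop, (birthMeasure n).real {t | ¬ E n t} ≤ f n) : Whp E :=
  squeeze_zero' (.of_forall fun _ ↦ measureReal_nonneg) h hf

lemma mono (hE : Whp E) (h : ∀ᶠ n in atTop, ∀ t, E n t → F n t) : Whp F := by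
  refine of_le hE ?_
  filter_upwards [h] with n hn
  exact measureReal_mono (fun t ↦ mt (hn t)) (measure_ne_top _ _)

lemma and (hE : Whp E) (hF : Whp F) : Whp fun n t ↦ E n t ∧ F n t := by
  have hsum := hE.add hF
  rw [add_zero] at hsum
  refine of_le hsum (.of_forall fun n ↦ ?_)
  rw [show {t | ¬ (E n t ∧ F n t)} = {t | ¬ E n t} ∪ {t | ¬ F n t} by ext t; exact not_and_or]
  exact measureReal_union_le _ _

lemma tendsto_birthMeasure (hE : Whp E) :
    Tendsto (fun n ↦ birthMeasure n {t | E n t}) atTop (nhds 1) := by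
  have hlower : Tendsto (fun n ↦ 1 - birthMeasure n {t | ¬ E n t}) atTop (nhds (1 - 0)) := by
    refine ENNReal.Tendsto.sub tendsto_const_nhds ?_ (.inl ENNReal.one_ne_top)
    rw [← ENNReal.ofReal_zero]
    exact (ENNReal.tendsto_ofReal hE).congr fun n ↦ ofReal_measureReal
  rw [tsub_zero] at hlower
  refine tendsto_of_tendsto_of_tendsto_of_le_of_le hlower tendsto_const_nhds (fun n ↦ ?_)
    fun n ↦ prob_le_one
  rw [tsub_le_iff_right, ← measure_univ (μ := birthMeasure n)]
  exact (measure_mono fun t _ ↦ em (E n t)).trans (measure_union_le _ _)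

end Whp

end WithHighProbability

section Asymptotics

open Finset

/-! ### Large minimal obstructions -/

lemma tendsto_log_pow_mul_rpow_neg (a : ℕ) {ε : ℝ} (hε : 0 < ε) :
    Tendsto (fun n : ℕ ↦ Real.log n ^ a * (n : ℝ) ^ (-ε)) atTop (nhds 0) := by
  refine ((isLittleO_log_rpow_rpow_atTop (a : ℝ) hε).tendsto_div_nhds_zero.comp
    tendsto_natCast_atTop_atTop).congr fun n ↦ ?_
  rw [Function.comp_apply, Real.rpow_natCast, Real.rpow_neg n.cast_nonneg, div_eq_mul_inv]

lemma eventually_mul_log_le_rpow (C : ℝ) {ε : ℝ} (hε : 0 < ε) :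
    ∀ᶠ n : ℕ in atTop, C * Real.log n ≤ (n : ℝ) ^ ε := by
  filter_upwards [tendsto_natCast_atTop_atTop.eventually
    (((isLittleO_log_rpow_atTop hε).const_mul_left C).bound one_pos)] with n hn
  rw [one_mul, Real.norm_of_nonneg (Real.rpow_nonneg n.cast_nonneg ε)] at hn
  exact (Real.le_norm_self _).trans hn

lemma eventually_mul_pow_le_factorial_mul_choose (c d : ℕ) {η : ℝ} (hη : η < 1) :
    ∀ᶠ n : ℕ in atTop, η * (n : ℝ) ^ d ≤ d.factorial * ((n - c).choose d : ℝ) := by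
  have hlim : Tendsto (fun n : ℕ ↦ (1 - ((c + d : ℕ) : ℝ) / n) ^ d) atTop (nhds 1) := by
    simpa only [sub_zero, one_pow] using
      ((tendsto_const_div_atTop_nhds_zero_nat ((c + d : ℕ) : ℝ)).const_sub 1).pow d
  filter_upwards [hlim.eventually (lt_mem_nhds hη), eventually_gt_atTop (c + d)] with n hn hcd
  have hn₀ : (n : ℝ) ≠ 0 := by
    norm_cast
    lia
  have hnat : (n - (c + d)) ^ d ≤ d.factorial * (n - c).choose d := by
    rw [← Nat.descFactorial_eq_factorial_mul_choose]
    exact (Nat.pow_le_pow_left (by lia) d).trans (Nat.pow_sub_le_descFactorial (n - c) d)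
  calc η * (n : ℝ) ^ d ≤ (1 - ((c + d : ℕ) : ℝ) / n) ^ d * n ^ d := by gcongr
    _ = ((n - (c + d) : ℕ) : ℝ) ^ d := by
        rw [← mul_pow, Nat.cast_sub hcd.le]
        field_simp
    _ ≤ d.factorial * ((n - c).choose d : ℝ) := by exact_mod_cast hnat

lemma exp_neg_mul_log {x : ℝ} (hx : 0 < x) (a : ℝ) :
    Real.exp (-(a * Real.log x)) = x ^ (-a) := by
  rw [Real.rpow_def_of_pos hx, mul_neg, mul_comm]

lemma rpow_neg_sub_natCast {x : ℝ} (hx : 0 < x) (a : ℝ) (m : ℕ) :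
    x ^ (-(a - m)) = x ^ m * x ^ (-a) := by
  rw [← Real.rpow_natCast, ← Real.rpow_add hx]
  ring_nf

/-- The birth time `b * d! * log n / n ^ d`: for `d = k - j` and `p = scaledTime d b n`, a set of
`j + 1` vertices lies in about `b * log n` facets of `G_p`. -/
noncomputable def scaledTime (d : ℕ) (b : ℝ) (n : ℕ) : ℝ :=
  b * d.factorial * Real.log n / (n : ℝ) ^ d

variable {d j k n s : ℕ} {b b₁ : ℝ}

lemma scaledTime_nonneg (hb : 0 ≤ b) : 0 ≤ scaledTime d b n := by
  unfold scaledTime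
  positivity

lemma scaledTime_mono : Monotone fun b ↦ scaledTime d b n := by
  intro b b' hb
  simp only [scaledTime]
  gcongr

lemma scaledTime_mul_pow (hn : n ≠ 0) :
    scaledTime d b n * (n : ℝ) ^ d = b * d.factorial * Real.log n := by
  unfold scaledTime
  field_simp

lemma tendsto_scaledTime (hd : d ≠ 0) (b : ℝ) : Tendsto (scaledTime d b) atTop (nhds 0) := by
  have hlim := (tendsto_log_pow_mul_rpow_neg 1 (Nat.cast_pos.2 hd.bot_lt)).const_mul
    (b * d.factorial)
  rw [mul_zero] at hlim
  refine hlim.congr fun n ↦ ?_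
  rw [scaledTime, Real.rpow_neg n.cast_nonneg, Real.rpow_natCast]
  ring

lemma eventually_scaledTime_lt_one (hd : d ≠ 0) (b : ℝ) : ∀ᶠ n in atTop, scaledTime d b n < 1 :=
  (tendsto_scaledTime hd b).eventually (gt_mem_nhds one_pos)

lemma eventually_scaledTime_mem_Icc (hd : d ≠ 0) (hb : 0 ≤ b) :
    ∀ᶠ n in atTop, scaledTime d b n ∈ Set.Icc (0 : ℝ) 1 := by
  filter_upwards [eventually_scaledTime_lt_one hd b] with n hn
  exact ⟨scaledTime_nonneg hb, hn.le⟩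

lemma tendsto_log_natCast_atTop : Tendsto (fun n : ℕ ↦ Real.log n) atTop atTop :=
  Real.tendsto_log_atTop.comp tendsto_natCast_atTop_atTop

lemma choose_succ_le_pow_mul_choose_mul_pow (n : ℕ) (hjk : j ≤ k) :
    n.choose (k + 1) ≤ n ^ (j + 1) * ((k + 1).choose (j + 1) * n ^ (k - j)) :=
  calc n.choose (k + 1) ≤ n ^ ((j + 1) + (k - j)) :=
        (Nat.choose_le_pow n (k + 1)).trans_eq (by congr 1; lia)
    _ = n ^ (j + 1) * n ^ (k - j) := pow_add ..
    _ ≤ _ := by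
        gcongr
        exact Nat.le_mul_of_pos_left _ (Nat.choose_pos (by lia))

lemma exists_eventually_real_obstructionEvent_le (hjk : j < k) (hb : 0 ≤ b) (hb₁ : 0 < b₁) :
    ∃ C : ℝ, 0 < C ∧ ∀ᶠ n : ℕ in atTop, ∀ (s h : ℕ) (a : ℝ),
      a * Real.log n ≤ scaledTime (k - j) b n * h →
        (birthMeasure n).real (obstructionEvent (Fin n) k j (scaledTime (k - j) b n)
          (scaledTime (k - j) b₁ n) s h) ≤
        (n : ℝ) ^ (j + 1) * (C * Real.log n) ^ (s + 1) * (n : ℝ) ^ (-a) := by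
  let A := (k + 1).choose (j + 1)
  have hA : 0 < A := Nat.choose_pos (by lia)
  let C : ℝ := 8 * A * 2 ^ A * b₁ * (k - j).factorial
  have hC : 0 < C := by positivity
  have hd : k - j ≠ 0 := by lia
  refine ⟨C, hC, ?_⟩
  filter_upwards [eventually_ne_atTop 0, eventually_scaledTime_mem_Icc hd hb,
    eventually_scaledTime_mem_Icc hd hb₁.le,
    tendsto_log_natCast_atTop.eventually_ge_atTop (2 / C)] with n hn hp₀ hp₁ hlog s h a ha
  have hn₀ : (0 : ℝ) < n := Nat.cast_pos.2 hn.bot_lt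
  rw [div_le_iff₀' hC] at hlog
  let D : ℕ := A * n ^ (k - j)
  let y : ℝ := 2 ^ A * scaledTime (k - j) b₁ n
  have hy : 0 ≤ y := mul_nonneg (by positivity) hp₁.1
  have hDy : 8 * D * y = C * Real.log n := by
    calc 8 * D * y = 8 * A * 2 ^ A * (scaledTime (k - j) b₁ n * (n : ℝ) ^ (k - j)) := by
          simp only [D, y]
          push_cast
          ring
      _ = C * Real.log n := by rw [scaledTime_mul_pow hn]; ring
  have hexp : Real.exp (-(scaledTime (k - j) b n * h)) ≤ (n : ℝ) ^ (-a) :=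
    exp_neg_mul_log hn₀ a ▸ Real.exp_le_exp.2 (neg_le_neg ha)
  have hroots : (n.choose (k + 1) : ℝ) ≤ (n : ℝ) ^ (j + 1) * D := by
    exact_mod_cast choose_succ_le_pow_mul_choose_mul_pow n hjk.le
  have hevent := uniformCube_real_obstructionEvent_le (V := Fin n) (D := D) hp₀ hp₁
    (by rw [Fintype.card_fin]) (y := y) rfl (by linarith) s h
  rw [Fintype.card_fin] at hevent
  calc _ ≤ ((n.choose (k + 1) : ℕ) : ℝ) * (2 * y * (8 * D * y) ^ s *
            Real.exp (-(scaledTime (k - j) b n * h))) := hevent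
    _ ≤ (n : ℝ) ^ (j + 1) * D * (8 * y * (8 * D * y) ^ s * (n : ℝ) ^ (-a)) := by
        gcongr
        norm_num
    _ = (n : ℝ) ^ (j + 1) * (C * Real.log n) ^ (s + 1) * (n : ℝ) ^ (-a) := by
        rw [← hDy]
        ring

lemma tendsto_real_obstructionEvent (hjk : j < k) (hb : 0 < b) (hb₁ : 0 < b₁)
    (hs : (j : ℝ) + 1 < b * s) :
    Tendsto (fun n : ℕ ↦ (birthMeasure n).real (obstructionEvent (Fin n) k j
      (scaledTime (k - j) b n) (scaledTime (k - j) b₁ n) s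
      (s * (n - (j + 1) * s).choose (k - j)))) atTop (nhds 0) := by
  obtain ⟨C, -, hbound⟩ := exists_eventually_real_obstructionEvent_le hjk hb.le hb₁
  obtain ⟨a, hja, has⟩ := exists_between hs
  have hbs : 0 < b * s := by linarith [(Nat.cast_nonneg j : (0 : ℝ) ≤ j)]
  have hs₀ : (s : ℝ) ≠ 0 := right_ne_zero_of_mul hbs.ne'
  have hlim := (tendsto_log_pow_mul_rpow_neg (s + 1) (sub_pos.2 hja)).const_mul (C ^ (s + 1))
  rw [mul_zero] at hlim
  refine squeeze_zero' (.of_forall fun n ↦ measureReal_nonneg) ?_ hlim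
  filter_upwards [hbound, eventually_ne_atTop 0, eventually_mul_pow_le_factorial_mul_choose
    ((j + 1) * s) (k - j) ((div_lt_one hbs).2 has)] with n hn hn₀ hchoose
  have hnpos : (0 : ℝ) < n := Nat.cast_pos.2 hn₀.bot_lt
  have := Real.log_natCast_nonneg n
  have hexponent : a * Real.log n ≤
      scaledTime (k - j) b n * ((s * (n - (j + 1) * s).choose (k - j) : ℕ) : ℝ) := by
    rw [scaledTime, div_mul_eq_mul_div, le_div_iff₀ (by positivity)]
    calc a * Real.log n * n ^ (k - j)
        = b * s * Real.log n * (a / (b * s) * n ^ (k - j)) := by field_simp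
      _ ≤ b * s * Real.log n * ((k - j).factorial * ((n - (j + 1) * s).choose (k - j) : ℝ)) := by
          gcongr
      _ = _ := by push_cast; ring
  refine (hn s _ a hexponent).trans_eq ?_
  have hsplit := rpow_neg_sub_natCast hnpos a (j + 1)
  push_cast at hsplit
  rw [hsplit, mul_pow]
  ring

lemma exists_eventually_mul_le_card_forbiddenFacets (hjk : j < k) :
    ∃ c : ℝ, 0 < c ∧ ∀ᶠ n : ℕ in atTop, ∀ S : Finset (Finset (Fin n)),
      n * #S ≤ #(oddCofaces j S) * (j + 2) →
        c * #S * (n : ℝ) ^ (k - j) ≤ #(forbiddenFacets k j S) := by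
  have hchoose : 0 < (k + 1).choose (j + 2) := Nat.choose_pos (by lia)
  refine ⟨(2 * ((j + 2) * (k - j - 1).factorial * (k + 1).choose (j + 2)))⁻¹, by positivity, ?_⟩
  filter_upwards [eventually_mul_pow_le_factorial_mul_choose (j + 2) (k - j - 1)
    (show (1 / 2 : ℝ) < 1 by norm_num)] with n hn S hS
  have hodd : (n : ℝ) * #S ≤ #(oddCofaces j S) * (j + 2) := by exact_mod_cast hS
  have hforb : (#(oddCofaces j S) : ℝ) * ((n - (j + 2)).choose (k - j - 1) : ℝ) ≤
      #(forbiddenFacets k j S) * (k + 1).choose (j + 2) := by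
    have hnat := card_oddCofaces_mul_choose_le hjk S
    rw [Fintype.card_fin] at hnat
    exact_mod_cast hnat
  rw [mul_assoc, inv_mul_le_iff₀ (by positivity)]
  calc (#S : ℝ) * n ^ (k - j) = 2 * ((n * #S) * (1 / 2 * n ^ (k - j - 1))) := by
        rw [show k - j = k - j - 1 + 1 by lia, pow_succ, Nat.add_sub_cancel]
        ring
    _ ≤ 2 * ((#(oddCofaces j S) * (j + 2)) *
          ((k - j - 1).factorial * ((n - (j + 2)).choose (k - j - 1) : ℝ))) := by gcongr
    _ = 2 * ((j + 2) * (k - j - 1).factorial *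
          (#(oddCofaces j S) * ((n - (j + 2)).choose (k - j - 1) : ℝ))) := by ring
    _ ≤ 2 * ((j + 2) * (k - j - 1).factorial *
          (#(forbiddenFacets k j S) * (k + 1).choose (j + 2))) := by gcongr
    _ = _ := by ring

lemma exists_eventually_real_obstructionEvent_le_rpow (hjk : j < k) (hb : 0 < b) (hb₁ : 0 < b₁)
    {c : ℝ} (hc : 0 < c) :
    ∃ γ : ℝ, 0 < γ ∧ ∀ᶠ n : ℕ in atTop, ∀ s : ℕ,
      (birthMeasure n).real (obstructionEvent (Fin n) k j (scaledTime (k - j) b n)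
        (scaledTime (k - j) b₁ n) s ⌈c * s * (n : ℝ) ^ (k - j)⌉₊) ≤
      (n : ℝ) ^ (j + 1) * (n : ℝ) ^ (-(γ * (s - 1))) := by
  obtain ⟨C, hC, hbound⟩ := exists_eventually_real_obstructionEvent_le hjk hb.le hb₁
  let γ : ℝ := b * (k - j).factorial * c / 2
  have hγ : 0 < γ := by positivity
  refine ⟨γ, hγ, ?_⟩
  filter_upwards [hbound, eventually_mul_log_le_rpow C hγ, eventually_ne_atTop 0]
    with n hn hClog hn₀ s
  have hnpos : (0 : ℝ) < n := Nat.cast_pos.2 hn₀.bot_lt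
  have hexponent : 2 * γ * s * Real.log n ≤
      scaledTime (k - j) b n * (⌈c * s * (n : ℝ) ^ (k - j)⌉₊ : ℝ) := by
    calc 2 * γ * s * Real.log n = c * s * (b * (k - j).factorial * Real.log n) := by ring
      _ = scaledTime (k - j) b n * (c * s * (n : ℝ) ^ (k - j)) := by
          rw [← scaledTime_mul_pow hn₀]
          ring
      _ ≤ _ := mul_le_mul_of_nonneg_left (Nat.le_ceil _) (scaledTime_nonneg hb.le)
  calc _ ≤ (n : ℝ) ^ (j + 1) * (C * Real.log n) ^ (s + 1) * (n : ℝ) ^ (-(2 * γ * s)) :=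
        hn s _ _ hexponent
    _ ≤ (n : ℝ) ^ (j + 1) * ((n : ℝ) ^ γ) ^ (s + 1) * (n : ℝ) ^ (-(2 * γ * s)) := by
        have := Real.log_natCast_nonneg n
        gcongr
    _ = (n : ℝ) ^ (j + 1) * (n : ℝ) ^ (-(γ * (s - 1))) := by
        rw [mul_assoc, ← Real.rpow_natCast _ (s + 1), ← Real.rpow_mul hnpos.le,
          ← Real.rpow_add hnpos]
        push_cast
        ring_nf

lemma exists_tendsto_sum_real_obstructionEvent (hjk : j < k) (hb : 0 < b) (hb₁ : 0 < b₁)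
    {c : ℝ} (hc : 0 < c) :
    ∃ s₀ : ℕ, Tendsto (fun n : ℕ ↦ ∑ s ∈ Icc s₀ (n ^ (j + 1)),
      (birthMeasure n).real (obstructionEvent (Fin n) k j (scaledTime (k - j) b n)
        (scaledTime (k - j) b₁ n) s ⌈c * s * (n : ℝ) ^ (k - j)⌉₊)) atTop (nhds 0) := by
  obtain ⟨γ, hγ, hbound⟩ := exists_eventually_real_obstructionEvent_le_rpow hjk hb hb₁ hc
  obtain ⟨r, hr⟩ := exists_nat_ge ((2 * (j : ℝ) + 3) / γ)
  rw [div_le_iff₀ hγ] at hr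
  refine ⟨r + 1, squeeze_zero' (.of_forall fun n ↦ sum_nonneg fun _ _ ↦ measureReal_nonneg) ?_
    (tendsto_inv_atTop_nhds_zero_nat (𝕜 := ℝ))⟩
  filter_upwards [hbound, eventually_ne_atTop 0] with n hn hn₀
  have hnpos : (0 : ℝ) < n := Nat.cast_pos.2 hn₀.bot_lt
  have hn₁ : (1 : ℝ) ≤ n := Nat.one_le_cast.2 hn₀.bot_lt
  have hterm : ∀ s ∈ Icc (r + 1) (n ^ (j + 1)), (birthMeasure n).real (obstructionEvent (Fin n) k j
      (scaledTime (k - j) b n) (scaledTime (k - j) b₁ n) s ⌈c * s * (n : ℝ) ^ (k - j)⌉₊) ≤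
        (n : ℝ) ^ (j + 1) * (n : ℝ) ^ (-(2 * (j : ℝ) + 3)) := by
    intro s hs
    have hrs : (r : ℝ) + 1 ≤ s := by exact_mod_cast (mem_Icc.1 hs).1
    refine (hn s).trans ?_
    gcongr
    nlinarith
  have hcard : ((n ^ (j + 1) + 1 - (r + 1) : ℕ) : ℝ) ≤ (n : ℝ) ^ (j + 1) := by
    exact_mod_cast (by lia : n ^ (j + 1) + 1 - (r + 1) ≤ n ^ (j + 1))
  calc _ ≤ ((n ^ (j + 1) + 1 - (r + 1) : ℕ) : ℝ) *
          ((n : ℝ) ^ (j + 1) * (n : ℝ) ^ (-(2 * (j : ℝ) + 3))) := by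
        simpa only [nsmul_eq_mul, Nat.card_Icc] using sum_le_card_nsmul _ _ _ hterm
    _ ≤ (n : ℝ) ^ (j + 1) * ((n : ℝ) ^ (j + 1) * (n : ℝ) ^ (-(2 * (j : ℝ) + 3))) := by gcongr
    _ = (n : ℝ)⁻¹ := by
        rw [← Real.rpow_natCast, ← Real.rpow_neg_one, ← Real.rpow_add hnpos, ← Real.rpow_add hnpos]
        push_cast
        ring_nf

lemma IsMinimalObstruction.card_le_pow {G : Set (Finset (Fin n))} {S : Finset (Finset (Fin n))}
    (hS : IsMinimalObstruction G j S) : #S ≤ n ^ (j + 1) := by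
  have hsub : S ⊆ univ.powersetCard (j + 1) :=
    fun σ hσ ↦ mem_powersetCard.2 ⟨subset_univ σ, (hS.isSimplex σ hσ).2⟩
  calc #S ≤ n.choose (j + 1) := by simpa using card_le_card hsub
    _ ≤ n ^ (j + 1) := Nat.choose_le_pow n (j + 1)

lemma exists_eventually_subset_biUnion_obstructionEvent (hj : 1 ≤ j) (hjk : j < k) :
    ∃ c : ℝ, 0 < c ∧ ∀ᶠ n : ℕ in atTop, ∀ (p₀ p₁ : ℝ) (s s₀ : ℕ),
      {t | ¬ ∀ p ∈ Set.Icc p₀ p₁, ∀ S, IsMinimalObstruction (complexAt k n t p) j S → #S < s} ⊆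
      (⋃ r ∈ Ico s s₀,
        obstructionEvent (Fin n) k j p₀ p₁ r (r * (n - (j + 1) * r).choose (k - j))) ∪
      ⋃ r ∈ Icc s₀ (n ^ (j + 1)),
        obstructionEvent (Fin n) k j p₀ p₁ r ⌈c * r * (n : ℝ) ^ (k - j)⌉₊ := by
  obtain ⟨c, hc, hforb⟩ := exists_eventually_mul_le_card_forbiddenFacets hjk
  refine ⟨c, hc, ?_⟩
  filter_upwards [hforb] with n hn p₀ p₁ s s₀ t ht
  rw [Set.mem_ofPred_eq] at ht
  push Not at ht
  obtain ⟨p, hp, S, hS, hs⟩ := ht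
  have hmem {h : ℕ} (hh : h ≤ #(forbiddenFacets k j S)) :=
    hS.mem_obstructionEvent isPure_complexAt (fun _ ↦ isSimplex_complexAt_iff (by lia)) hj hp hh
  obtain hS₀ | hS₀ := lt_or_ge #S s₀
  · have hcard := card_mul_choose_le_card_forbiddenFacets hjk fun σ hσ ↦ (hS.isSimplex σ hσ).2
    rw [Fintype.card_fin] at hcard
    exact .inl (Set.mem_biUnion (mem_Ico.2 ⟨hs, hS₀⟩) (hmem hcard))
  · have hodd := hS.card_mul_card_le isPure_complexAt.isRelLowerSet
    rw [Fintype.card_fin] at hodd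
    exact .inr (Set.mem_biUnion (mem_Icc.2 ⟨hS₀, hS.card_le_pow⟩)
      (hmem (Nat.ceil_le.2 (hn S hodd))))

lemma whp_card_lt_of_isMinimalObstruction (hj : 1 ≤ j) (hjk : j < k) (hb : 0 < b) (hb₁ : 0 < b₁)
    (hs : (j : ℝ) + 1 < b * s) :
    Whp fun n t ↦ ∀ p ∈ Set.Icc (scaledTime (k - j) b n) (scaledTime (k - j) b₁ n), ∀ S,
      IsMinimalObstruction (complexAt k n t p) j S → #S < s := by
  obtain ⟨c, hc, hsub⟩ := exists_eventually_subset_biUnion_obstructionEvent hj hjk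
  obtain ⟨s₀, hlarge⟩ := exists_tendsto_sum_real_obstructionEvent hjk hb hb₁ hc
  have hsmall : Tendsto (fun n : ℕ ↦ ∑ r ∈ Ico s s₀, (birthMeasure n).real
      (obstructionEvent (Fin n) k j (scaledTime (k - j) b n) (scaledTime (k - j) b₁ n) r
        (r * (n - (j + 1) * r).choose (k - j)))) atTop (nhds (∑ _ ∈ Ico s s₀, 0)) := by
    refine tendsto_finsetSum _ fun r hr ↦ tendsto_real_obstructionEvent hjk hb hb₁ ?_
    have hsr : (s : ℝ) ≤ r := Nat.cast_le.2 (mem_Ico.1 hr).1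
    exact hs.trans_le (mul_le_mul_of_nonneg_left hsr hb.le)
  have hsum := hsmall.add hlarge
  rw [sum_const_zero, add_zero] at hsum
  refine .of_le hsum ?_
  filter_upwards [hsub] with n hn
  calc _ ≤ _ := measureReal_mono (hn _ _ s s₀) (measure_ne_top _ _)
    _ ≤ _ := measureReal_union_le _ _
    _ ≤ _ := add_le_add (measureReal_biUnion_finset_le _ _) (measureReal_biUnion_finset_le _ _)

end Asymptotics

section MissingFaces

open Finset

/-! ### Missing faces -/

variable {j k n : ℕ} {b : ℝ}

lemma mem_complexAt_of_subset (hj : 1 ≤ j) {p : ℝ} {t : Finset (Fin n) → ℝ} {K : Finset (Fin n)}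
    (hK : #K = k + 1) (htK : t K ≤ p) {σ : Finset (Fin n)} (hσK : σ ⊆ K) (hσ : #σ = j + 1) :
    σ ∈ complexAt k n t p :=
  (mem_complexAt_iff (by lia)).2 ⟨K, hK, htK, hσK⟩

section RandomSetFamily

variable [Fintype V] {G : (Finset V → ℝ) → Set (Finset V)} {p : ℝ}

lemma uniformCube_real_setOf_forall_notMem_le (hjk : j ≤ k) (hp : p ∈ Set.Icc (0 : ℝ) 1)
    (hG : ∀ ⦃t K⦄, #K = k + 1 → t K ≤ p → ∀ ⦃σ⦄, σ ⊆ K → #σ = j + 1 → σ ∈ G t)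
    {S : Finset (Finset V)} {U : Finset V} (hS : ∀ σ ∈ S, σ ⊆ U ∧ #σ = j + 1) :
    (uniformCube (Finset V)).real {t | ∀ σ ∈ S, σ ∉ G t} ≤
      Real.exp (-(p * (#S * (Fintype.card V - #U).choose (k - j) : ℕ))) := by
  have hsub : {t | ∀ σ ∈ S, σ ∉ G t} ⊆
      birthBox ∅ {K ∈ (univ : Finset V).powersetCard (k + 1) | K ∩ U ∈ S} p p := by
    refine fun t ht ↦ ⟨by simp, fun K hK ↦ ?_⟩
    obtain ⟨hKcard, hKS⟩ := mem_filter.1 hK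
    by_contra! htK
    exact ht _ hKS (hG (mem_powersetCard.1 hKcard).2 htK inter_subset_left (hS _ hKS).2)
  calc _ ≤ _ := measureReal_mono hsub (measure_ne_top _ _)
    _ ≤ _ := uniformCube_real_birthBox_le_exp (disjoint_empty_left _) hp hp
      (card_mul_choose_le_card_inter_mem hjk hS)
    _ = _ := by rw [card_empty, pow_zero, one_mul]

lemma setOf_not_isNearlyComplete_subset (G : (Finset V → ℝ) → Set (Finset V)) (j m : ℕ) :
    {t | ¬ IsNearlyComplete (G t) j m} ⊆
      ⋃ x ∈ ({x | #x.1 = m ∧ #x.2 = j ∧ Disjoint x.1 x.2} : Finset (Finset V × Finset V)),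
        {t | ∀ σ ∈ x.1.image (insert · x.2), σ ∉ G t} := by
  intro t ht
  simp only [Set.mem_ofPred_eq, IsNearlyComplete, not_forall, not_le] at ht
  obtain ⟨B, hB, hm⟩ := ht
  obtain ⟨A, hA, hAm⟩ := exists_subset_card_eq hm.le
  have hmissing : ∀ a ∈ A, a ∉ B ∧ insert a B ∉ G t := fun a ha ↦ (mem_filter.1 (hA ha)).2
  refine Set.mem_biUnion (x := (A, B)) (mem_filter.2 ⟨mem_univ _, hAm, hB, ?_⟩) ?_
  · exact disjoint_left.2 fun a ha ↦ (hmissing a ha).1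
  · rintro σ hσ
    obtain ⟨a, ha, rfl⟩ := mem_image.1 hσ
    exact (hmissing a ha).2

lemma card_image_insert_of_disjoint {α : Type*} {A B : Finset α} (hAB : Disjoint A B) :
    #(A.image (insert · B)) = #A := by
  refine card_image_of_injOn fun a ha a' _ h ↦ ?_
  have haB := disjoint_left.1 hAB ha
  have haa' : a ∈ insert a' B := (show insert a B = insert a' B from h) ▸ mem_insert_self a B
  exact (mem_insert.1 haa').resolve_right haB

lemma uniformCube_real_setOf_not_isNearlyComplete_le (hjk : j ≤ k) (hp : p ∈ Set.Icc (0 : ℝ) 1)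
    (hG : ∀ ⦃t K⦄, #K = k + 1 → t K ≤ p → ∀ ⦃σ⦄, σ ⊆ K → #σ = j + 1 → σ ∈ G t) (m : ℕ) :
    (uniformCube (Finset V)).real {t | ¬ IsNearlyComplete (G t) j m} ≤
      2 ^ Fintype.card V * 2 ^ Fintype.card V *
        Real.exp (-(p * (m * (Fintype.card V - (m + j)).choose (k - j) : ℕ))) := by
  have hpair : ∀ x ∈ ({x | #x.1 = m ∧ #x.2 = j ∧ Disjoint x.1 x.2} :
      Finset (Finset V × Finset V)),
      (uniformCube (Finset V)).real {t | ∀ σ ∈ x.1.image (insert · x.2), σ ∉ G t} ≤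
        Real.exp (-(p * (m * (Fintype.card V - (m + j)).choose (k - j) : ℕ))) := by
    rintro ⟨A, B⟩ hx
    obtain ⟨-, hA, hB, hAB⟩ := mem_filter.1 hx
    dsimp only at hA hB hAB ⊢
    have hfaces : ∀ σ ∈ A.image (insert · B), σ ⊆ A ∪ B ∧ #σ = j + 1 := by
      intro σ hσ
      obtain ⟨a, ha, rfl⟩ := mem_image.1 hσ
      exact ⟨insert_subset (mem_union_left _ ha) subset_union_right,
        hB ▸ card_insert_of_notMem (disjoint_left.1 hAB ha)⟩
    have hbound := uniformCube_real_setOf_forall_notMem_le hjk hp hG hfaces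
    rwa [card_image_insert_of_disjoint hAB, card_union_of_disjoint hAB, hA, hB] at hbound
  have hpairs : #({x | #x.1 = m ∧ #x.2 = j ∧ Disjoint x.1 x.2} : Finset (Finset V × Finset V)) ≤
      2 ^ Fintype.card V * 2 ^ Fintype.card V := by
    rw [← Fintype.card_finset, ← Fintype.card_prod]
    exact card_le_univ _
  calc _ ≤ _ := measureReal_le_sum_of_subset_biUnion (setOf_not_isNearlyComplete_subset G j m)
    _ ≤ _ := sum_le_card_nsmul _ _ _ hpair
    _ ≤ _ := by
      rw [nsmul_eq_mul]
      gcongr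
      exact_mod_cast hpairs

end RandomSetFamily

lemma eventually_real_setOf_notMem_complexAt_le {a : ℝ} (hj : 1 ≤ j) (hjk : j < k) (hb : 0 < b)
    (hab : a < b) :
    ∀ᶠ n : ℕ in atTop, ∀ σ : Finset (Fin n), #σ = j + 1 →
      (birthMeasure n).real {t | σ ∉ complexAt k n t (scaledTime (k - j) b n)} ≤
        (n : ℝ) ^ (-a) := by
  filter_upwards [eventually_mul_pow_le_factorial_mul_choose (j + 1) (k - j)
    ((div_lt_one hb).2 hab), eventually_ne_atTop 0,
    eventually_scaledTime_mem_Icc (by lia : k - j ≠ 0) hb.le] with n hchoose hn₀ hp σ hσ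
  have hnpos : (0 : ℝ) < n := Nat.cast_pos.2 hn₀.bot_lt
  have := Real.log_natCast_nonneg n
  have hexponent : a * Real.log n ≤
      scaledTime (k - j) b n * (1 * (n - (j + 1)).choose (k - j) : ℕ) := by
    rw [scaledTime, div_mul_eq_mul_div, le_div_iff₀ (by positivity)]
    calc a * Real.log n * n ^ (k - j) = b * Real.log n * (a / b * n ^ (k - j)) := by field_simp
      _ ≤ b * Real.log n * ((k - j).factorial * ((n - (j + 1)).choose (k - j) : ℝ)) := by gcongr
      _ = _ := by push_cast; ring
  have hbound := uniformCube_real_setOf_forall_notMem_le (S := {σ}) (U := σ) hjk.le hp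
    (fun _ _ ↦ mem_complexAt_of_subset hj) (by simp [hσ])
  simp only [mem_singleton, forall_eq, card_singleton, hσ, Fintype.card_fin] at hbound
  refine hbound.trans ?_
  rw [← exp_neg_mul_log hnpos]
  exact Real.exp_le_exp.2 (neg_le_neg hexponent)

lemma whp_forall_mem_complexAt (hj : 1 ≤ j) (hjk : j < k) (hb : (j : ℝ) + 1 < b) :
    Whp fun n t ↦ ∀ σ, #σ = j + 1 → σ ∈ complexAt k n t (scaledTime (k - j) b n) := by
  obtain ⟨a, hja, hab⟩ := exists_between hb
  refine .of_le (tendsto_log_pow_mul_rpow_neg 0 (sub_pos.2 hja)) ?_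
  filter_upwards [eventually_real_setOf_notMem_complexAt_le hj hjk
    (lt_trans (by positivity) hb) hab, eventually_ne_atTop 0] with n hmissing hn₀
  have hnpos : (0 : ℝ) < n := Nat.cast_pos.2 hn₀.bot_lt
  have hsub : {t | ¬ ∀ σ, #σ = j + 1 → σ ∈ complexAt k n t (scaledTime (k - j) b n)} ⊆
      ⋃ σ ∈ univ.powersetCard (j + 1), {t | σ ∉ complexAt k n t (scaledTime (k - j) b n)} := by
    intro t ht
    rw [Set.mem_ofPred_eq] at ht
    push Not at ht
    obtain ⟨σ, hσ, hσt⟩ := ht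
    exact Set.mem_biUnion (mem_powersetCard.2 ⟨subset_univ σ, hσ⟩) hσt
  calc _ ≤ _ := measureReal_le_sum_of_subset_biUnion hsub
    _ ≤ n.choose (j + 1) * (n : ℝ) ^ (-a) := by
        simpa using sum_le_card_nsmul (univ.powersetCard (j + 1)) _ _
          fun σ hσ ↦ hmissing σ (mem_powersetCard.1 hσ).2
    _ ≤ (n : ℝ) ^ (j + 1) * (n : ℝ) ^ (-a) := by
        gcongr
        exact_mod_cast Nat.choose_le_pow n (j + 1)
    _ = Real.log n ^ 0 * (n : ℝ) ^ (-(a - (j + 1))) := by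
        have hsplit := rpow_neg_sub_natCast hnpos a (j + 1)
        push_cast at hsplit
        rw [hsplit, pow_zero, one_mul]

lemma exists_eventually_mul_log_mul_le (hj : 1 ≤ j) (d : ℕ) (hb : 0 < b) :
    ∃ c : ℝ, 0 < c ∧ ∀ᶠ n : ℕ in atTop, c * Real.log n * n ≤
      scaledTime d b n * (n / (j + 2) * (n - (n / (j + 2) + j)).choose d : ℕ) := by
  refine ⟨b * (1 / 2) * (1 / 6) ^ d * (1 / (2 * (j + 2))), by positivity, ?_⟩
  have hthird : Tendsto (fun n : ℕ ↦ n / 3) atTop atTop :=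
    Nat.tendsto_div_const_atTop three_ne_zero
  filter_upwards [hthird.eventually (eventually_mul_pow_le_factorial_mul_choose 0 d
    (show (1 / 2 : ℝ) < 1 by norm_num)), eventually_ge_atTop (6 * (j + 2))] with n hchoose hn
  have hn₀ : (n : ℝ) ≠ 0 := by
    norm_cast
    lia
  have := Real.log_natCast_nonneg n
  have hm : (n : ℝ) / (2 * (j + 2)) ≤ (n / (j + 2) : ℕ) := by
    have hdiv := Nat.lt_mul_div_succ n (show 0 < j + 2 by lia)
    have : 1 ≤ n / (j + 2) := (Nat.le_div_iff_mul_le (by lia)).2 (by lia)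
    rw [div_le_iff₀ (by positivity)]
    norm_cast
    nlinarith
  have hsixth : (n : ℝ) / 6 ≤ (n / 3 : ℕ) := by
    rw [div_le_iff₀ (by norm_num)]
    norm_cast
    lia
  have hm₃ : n / (j + 2) ≤ n / 3 := Nat.div_le_div_left (by lia) three_pos
  have hchoose' : 1 / 2 * ((n : ℝ) / 6) ^ d ≤
      d.factorial * ((n - (n / (j + 2) + j)).choose d : ℝ) := by
    calc 1 / 2 * ((n : ℝ) / 6) ^ d ≤ 1 / 2 * ((n / 3 : ℕ) : ℝ) ^ d := by gcongr
      _ ≤ d.factorial * ((n / 3).choose d : ℝ) := hchoose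
      _ ≤ d.factorial * ((n - (n / (j + 2) + j)).choose d : ℝ) := by
          gcongr
          lia
  rw [scaledTime, div_mul_eq_mul_div, le_div_iff₀ (by positivity)]
  calc _ = b * Real.log n * (n / (2 * (j + 2))) * (1 / 2 * ((n : ℝ) / 6) ^ d) := by
        rw [div_pow, div_pow]
        ring
    _ ≤ b * Real.log n * (n / (j + 2) : ℕ) *
          (d.factorial * ((n - (n / (j + 2) + j)).choose d : ℝ)) := by gcongr
    _ = _ := by push_cast; ring

lemma whp_isNearlyComplete (hj : 1 ≤ j) (hjk : j < k) (hb : 0 < b) :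
    Whp fun n t ↦
      IsNearlyComplete (complexAt k n t (scaledTime (k - j) b n)) j (n / (j + 2)) := by
  have hd : k - j ≠ 0 := by lia
  obtain ⟨c, hc, hexponent⟩ := exists_eventually_mul_log_mul_le hj (k - j) hb
  refine .of_le (Real.tendsto_exp_neg_atTop_nhds_zero.comp tendsto_natCast_atTop_atTop) ?_
  filter_upwards [hexponent, eventually_scaledTime_mem_Icc hd hb.le,
    tendsto_log_natCast_atTop.eventually_ge_atTop (3 / c)] with n hn hp hlog
  rw [div_le_iff₀' hc] at hlog
  have htwo : (2 : ℝ) ^ n ≤ Real.exp n := by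
    rw [← Real.exp_one_pow]
    gcongr
    linarith [Real.add_one_le_exp 1]
  have h3n : (3 : ℝ) * n ≤ c * Real.log n * n := by gcongr
  have hbound := uniformCube_real_setOf_not_isNearlyComplete_le
    (G := fun t ↦ complexAt k n t (scaledTime (k - j) b n)) hjk.le hp
    (fun _ _ ↦ mem_complexAt_of_subset hj) (n / (j + 2))
  rw [Fintype.card_fin] at hbound
  calc _ ≤ _ := hbound
    _ ≤ Real.exp n * Real.exp n * Real.exp (-(3 * n)) :=
        mul_le_mul (by gcongr) (Real.exp_le_exp.2 (neg_le_neg (h3n.trans hn))) (by positivity)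
          (by positivity)
    _ = Real.exp (-n) := by
        rw [← Real.exp_add, ← Real.exp_add]
        ring_nf

end MissingFaces

section SecondMoment

open Finset ProbabilityTheory

/-! ### Second moment method -/

variable {Ω ι : Type*} [MeasurableSpace Ω] {μ : Measure Ω} [IsProbabilityMeasure μ]
  {I : Finset ι} {A : ι → Set Ω}

lemma memLp_indicator_one {A : Set Ω} (hA : MeasurableSet A) :
    MemLp (A.indicator (1 : Ω → ℝ)) 2 μ :=
  memLp_indicator_const 2 hA 1 (.inr (measure_ne_top _ _))

lemma covariance_indicator_one {A B : Set Ω} (hA : MeasurableSet A) (hB : MeasurableSet B) :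
    cov[A.indicator (1 : Ω → ℝ), B.indicator 1; μ] = μ.real (A ∩ B) - μ.real A * μ.real B := by
  rw [covariance_eq_sub (memLp_indicator_one hA) (memLp_indicator_one hB),
    ← Set.inter_indicator_one, integral_indicator_one (hA.inter hB), integral_indicator_one hA,
    integral_indicator_one hB]

lemma variance_sum_indicator_one_le
    (hA : ∀ i ∈ I, MeasurableSet (A i)) {Q : ℝ} (hQ₁ : 1 ≤ Q)
    (hQ : ∀ i ∈ I, ∀ i' ∈ I, i ≠ i' → μ.real (A i ∩ A i') ≤ μ.real (A i) * μ.real (A i') * Q) :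
    Var[∑ i ∈ I, (A i).indicator (1 : Ω → ℝ); μ] ≤
      ∑ i ∈ I, μ.real (A i) + (∑ i ∈ I, μ.real (A i)) ^ 2 * (Q - 1) := by
  have hcov : ∀ i ∈ I, ∀ i' ∈ I, cov[(A i).indicator (1 : Ω → ℝ), (A i').indicator 1; μ] ≤
      (if i = i' then μ.real (A i) else 0) + μ.real (A i) * μ.real (A i') * (Q - 1) := by
    intro i hi i' hi'
    rw [covariance_indicator_one (hA i hi) (hA i' hi')]
    split_ifs with h
    · subst h
      rw [Set.inter_self]
      have : 0 ≤ μ.real (A i) * μ.real (A i) * Q := by positivity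
      linarith
    · linarith [hQ i hi i' hi' h]
  calc _ = ∑ i ∈ I, ∑ i' ∈ I, cov[(A i).indicator (1 : Ω → ℝ), (A i').indicator 1; μ] :=
        variance_sum' fun i hi ↦ memLp_indicator_one (hA i hi)
    _ ≤ ∑ i ∈ I, ∑ i' ∈ I,
          ((if i = i' then μ.real (A i) else 0) + μ.real (A i) * μ.real (A i') * (Q - 1)) :=
        sum_le_sum fun i hi ↦ sum_le_sum (hcov i hi)
    _ = _ := by
        rw [sq, sum_mul_sum]
        simp only [sum_add_distrib, sum_ite_eq, sum_mul]
        congr 1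
        exact sum_congr rfl fun i hi ↦ if_pos hi

lemma measureReal_forall_notMem_le
    (hA : ∀ i ∈ I, MeasurableSet (A i)) {Q : ℝ} (hQ₁ : 1 ≤ Q)
    (hQ : ∀ i ∈ I, ∀ i' ∈ I, i ≠ i' → μ.real (A i ∩ A i') ≤ μ.real (A i) * μ.real (A i') * Q)
    (hpos : 0 < ∑ i ∈ I, μ.real (A i)) :
    μ.real {x | ∀ i ∈ I, x ∉ A i} ≤ (∑ i ∈ I, μ.real (A i))⁻¹ + (Q - 1) := by
  set E := ∑ i ∈ I, μ.real (A i)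
  let X : Ω → ℝ := ∑ i ∈ I, (A i).indicator 1
  have hX : MemLp X 2 μ := memLp_finsetSum' I fun i hi ↦ memLp_indicator_one (hA i hi)
  have hmean : μ[X] = E := by
    simp only [X, Finset.sum_apply]
    rw [integral_finsetSum I fun i hi ↦ (memLp_indicator_one (hA i hi)).integrable one_le_two]
    exact sum_congr rfl fun i hi ↦ integral_indicator_one (hA i hi)
  have hsub : {x | ∀ i ∈ I, x ∉ A i} ⊆ {x | E ≤ |X x - μ[X]|} := by
    intro x hx
    have hXx : X x = 0 := by
      simp only [X, Finset.sum_apply]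
      exact sum_eq_zero fun i hi ↦ Set.indicator_of_notMem (hx i hi) _
    rw [Set.mem_ofPred_eq, hXx, hmean, zero_sub, abs_neg, abs_of_pos hpos]
  calc _ ≤ Var[X; μ] / E ^ 2 := ENNReal.toReal_le_of_le_ofReal (by positivity [variance_nonneg X μ])
        ((measure_mono hsub).trans (meas_ge_le_variance_div_sq hX hpos))
    _ ≤ (E + E ^ 2 * (Q - 1)) / E ^ 2 := by
        gcongr
        exact variance_sum_indicator_one_le hA hQ₁ hQ
    _ = _ := by field_simp

end SecondMoment

section BlockingFacets

open Finset

/-! ### Copies of `M_j^-` -/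

variable [Fintype V] {j k : ℕ} {p : ℝ} {K K' C C' : Finset V}

/-- The sets of `k + 1` vertices other than `K` that contain a petal of the flower `F(K, C)`:
these must not be facets for `K` and `C` to form a copy of `M_j^-`. -/
noncomputable def blockingFacets (k : ℕ) (K C : Finset V) : Finset (Finset V) :=
  {L ∈ univ.powersetCard (k + 1) | L ≠ K ∧ ∃ w ∈ K \ C, insert w C ⊆ L}

lemma mem_blockingFacets {L : Finset V} :
    L ∈ blockingFacets k K C ↔ #L = k + 1 ∧ L ≠ K ∧ ∃ w ∈ K \ C, insert w C ⊆ L := by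
  rw [blockingFacets, mem_filter, mem_powersetCard_univ]

lemma notMem_blockingFacets_self : K ∉ blockingFacets k K C :=
  fun h ↦ (mem_blockingFacets.1 h).2.1 rfl

lemma isMjMinus_of_mem_birthBox {G : Set (Finset V)} {t : Finset V → ℝ}
    (hG : IsRelLowerSet G Finset.Nonempty) (hGt : ∀ L, IsSimplex G k L ↔ #L = k + 1 ∧ t L ≤ p)
    (hK : #K = k + 1) (hj : 1 ≤ j) (hC : #C = j) (hCK : C ⊆ K)
    (ht : t ∈ birthBox {K} (blockingFacets k K C) p p) : IsMjMinus G k j K C := by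
  have hKG := (hGt K).2 ⟨hK, ht.1 K (mem_singleton_self K)⟩
  refine ⟨hKG, hG.mem_of_le hKG.1 hCK (card_pos.1 (by lia)), hC, hCK, ?_⟩
  rintro P ⟨w, hw, rfl⟩ L hL hPL
  by_contra hne
  have hLblock := mem_blockingFacets.2 ⟨((hGt L).1 hL).1, hne, w, hw, hPL⟩
  exact (ht.2 L hLblock).not_ge ((hGt L).1 hL).2

lemma card_blockingFacets_le (hjk : j ≤ k) (hK : #K = k + 1) (hC : #C = j) (hCK : C ⊆ K) :
    #(blockingFacets k K C) ≤ (k - j + 1) * (Fintype.card V).choose (k - j) := by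
  have hsub : blockingFacets k K C ⊆ (K \ C).biUnion fun w ↦
      {L ∈ univ.powersetCard (k + 1) | insert w C ⊆ L} := by
    intro L hL
    obtain ⟨hLcard, -, w, hw, hwL⟩ := mem_blockingFacets.1 hL
    exact mem_biUnion.2 ⟨w, hw, mem_filter.2 ⟨mem_powersetCard_univ.2 hLcard, hwL⟩⟩
  calc _ ≤ _ := card_le_card hsub
    _ ≤ #(K \ C) * (Fintype.card V).choose (k - j) := by
      refine card_biUnion_le_card_mul _ _ _ fun w hw ↦ ?_
      have hP : #(insert w C) = j + 1 := by rw [card_insert_of_notMem (mem_sdiff.1 hw).2, hC]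
      rw [card_filter_powersetCard_subset _ _ _ (subset_univ _) (by lia), hP, card_univ,
        Nat.add_sub_add_right]
      exact Nat.choose_le_choose _ (Nat.sub_le _ _)
    _ = _ := by
      rw [card_sdiff_of_subset hCK, hK, hC, Nat.sub_add_comm hjk]

lemma card_filter_subset_subset_le {P P' : Finset V} (hjk : j < k)
    (hPP' : j + 2 ≤ #(P ∪ P')) :
    #{L ∈ univ.powersetCard (k + 1) | P ⊆ L ∧ P' ⊆ L} ≤ Fintype.card V ^ (k - j - 1) := by
  obtain ⟨ρ, hρ, hρcard⟩ := exists_subset_card_eq hPP'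
  calc _ ≤ #{L ∈ univ.powersetCard (k + 1) | ρ ⊆ L} :=
        card_le_card (monotone_filter_right _ fun L _ hL ↦ hρ.trans (union_subset hL.1 hL.2))
    _ = (Fintype.card V - (j + 2)).choose (k - j - 1) := by
        rw [card_filter_powersetCard_subset _ _ _ (subset_univ ρ) (by lia), hρcard, card_univ]
        congr 1
        lia
    _ ≤ Fintype.card V ^ (k - j - 1) :=
        (Nat.choose_le_pow _ _).trans (Nat.pow_le_pow_left (Nat.sub_le _ _) _)

lemma card_blockingFacets_inter_le (hjk : j < k) (hK : #K = k + 1) (hK' : #K' = k + 1)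
    (hC' : #C' = j) (hCK' : C' ⊆ K') (hne : K' ≠ K) (hnotMem : K' ∉ blockingFacets k K C) :
    #(blockingFacets k K C ∩ blockingFacets k K' C') ≤
      (k + 1) * (k + 1) * Fintype.card V ^ (k - j - 1) := by
  have hsub : blockingFacets k K C ∩ blockingFacets k K' C' ⊆ ((K \ C) ×ˢ (K' \ C')).biUnion
      fun w ↦ {L ∈ univ.powersetCard (k + 1) | insert w.1 C ⊆ L ∧ insert w.2 C' ⊆ L} := by
    intro L hL
    obtain ⟨⟨hLcard, -, w, hw, hwL⟩, -, -, w', hw', hwL'⟩ :=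
      (mem_inter.1 hL).imp mem_blockingFacets.1 mem_blockingFacets.1
    exact mem_biUnion.2 ⟨(w, w'), mem_product.2 ⟨hw, hw'⟩,
      mem_filter.2 ⟨mem_powersetCard_univ.2 hLcard, hwL, hwL'⟩⟩
  have hpetals : ∀ w ∈ K \ C, ∀ w' ∈ K' \ C', j + 2 ≤ #(insert w C ∪ insert w' C') := by
    intro w hw w' hw'
    by_contra! hlt
    have hP' : #(insert w' C') = j + 1 := by rw [card_insert_of_notMem (mem_sdiff.1 hw').2, hC']
    have hunion := eq_of_subset_of_card_le
      (subset_union_right (s₁ := insert w C) (s₂ := insert w' C')) (by lia)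
    have hPK' : insert w C ⊆ K' := calc
      insert w C ⊆ insert w' C' := hunion ▸ subset_union_left
      _ ⊆ K' := insert_subset (mem_sdiff.1 hw').1 hCK'
    exact hnotMem (mem_blockingFacets.2 ⟨hK', hne, w, hw, hPK'⟩)
  calc _ ≤ _ := card_le_card hsub
    _ ≤ #((K \ C) ×ˢ (K' \ C')) * Fintype.card V ^ (k - j - 1) := by
      refine card_biUnion_le_card_mul _ _ _ fun w hw ↦ ?_
      exact card_filter_subset_subset_le hjk
        (hpetals _ (mem_product.1 hw).1 _ (mem_product.1 hw).2)
    _ ≤ _ := by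
      rw [card_product]
      gcongr
      exacts [hK ▸ card_le_card sdiff_subset, hK' ▸ card_le_card sdiff_subset]

lemma uniformCube_real_birthBox_inter_le {ι : Type*} [Fintype ι] [DecidableEq ι] {i i' : ι}
    {B B' : Finset ι} {m : ℕ} (hi : i ∉ B) (hi' : i' ∉ B') (hii' : i ≠ i') (hp₀ : 0 ≤ p)
    (hp₁ : p < 1) (hm : i' ∉ B → i ∉ B' → #(B ∩ B') ≤ m) :
    (uniformCube ι).real (birthBox {i} B p p ∩ birthBox {i'} B' p p) ≤
      (uniformCube ι).real (birthBox {i} B p p) * (uniformCube ι).real (birthBox {i'} B' p p) *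
        ((1 - p) ^ m)⁻¹ := by
  have hp : p ∈ Set.Icc (0 : ℝ) 1 := ⟨hp₀, hp₁.le⟩
  have hq : 0 < 1 - p := sub_pos.2 hp₁
  by_cases hblock : i' ∈ B ∨ i ∈ B'
  · have hempty : birthBox {i} B p p ∩ birthBox {i'} B' p p = ∅ := by
      refine Set.eq_empty_of_forall_notMem fun t ⟨ht, ht'⟩ ↦ ?_
      rcases hblock with h | h
      · exact (ht.2 i' h).not_ge (ht'.1 i' (mem_singleton_self i'))
      · exact (ht'.2 i h).not_ge (ht.1 i (mem_singleton_self i))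
    rw [hempty, measureReal_empty]
    positivity
  push Not at hblock
  have hinter : birthBox {i} B p p ∩ birthBox {i'} B' p p = birthBox {i, i'} (B ∪ B') p p := by
    ext t
    simp only [birthBox, Set.mem_inter_iff, Set.mem_ofPred_eq, mem_singleton, mem_insert,
      mem_union, forall_eq, or_imp, forall_and]
    tauto
  rw [hinter, uniformCube_real_birthBox (disjoint_singleton_left.2 hi) hp hp,
    uniformCube_real_birthBox (disjoint_singleton_left.2 hi') hp hp,
    uniformCube_real_birthBox (by simp [hi, hi', hblock]) hp hp, card_pair hii', card_singleton,
    card_singleton, ← div_eq_mul_inv, le_div_iff₀ (by positivity)]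
  calc p ^ 2 * (1 - p) ^ #(B ∪ B') * (1 - p) ^ m
      ≤ p ^ 2 * (1 - p) ^ #(B ∪ B') * (1 - p) ^ #(B ∩ B') :=
        mul_le_mul_of_nonneg_left (pow_le_pow_of_le_one hq.le (by linarith)
          (hm hblock.1 hblock.2)) (by positivity)
    _ = p ^ 2 * (1 - p) ^ (#B + #B') := by rw [mul_assoc, ← pow_add, card_union_add_card_inter]
    _ = _ := by ring

lemma le_sum_uniformCube_real_birthBox {c : Finset V → Finset V}
    (hc : ∀ K, #K = k + 1 → c K ⊆ K ∧ #(c K) = j) (hjk : j ≤ k) (hp₀ : 0 ≤ p) (hp₁ : p ≤ 1) :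
    (Fintype.card V).choose (k + 1) *
        (p * (1 - p) ^ ((k - j + 1) * (Fintype.card V).choose (k - j))) ≤
      ∑ K ∈ univ.powersetCard (k + 1),
        (uniformCube (Finset V)).real (birthBox {K} (blockingFacets k K (c K)) p p) := by
  rw [← card_univ, ← card_powersetCard, ← nsmul_eq_mul, card_univ]
  refine card_nsmul_le_sum _ _ _ fun K hK ↦ ?_
  obtain ⟨hcK, hcard⟩ := hc K (mem_powersetCard_univ.1 hK)
  rw [uniformCube_real_birthBox (disjoint_singleton_left.2 notMem_blockingFacets_self) ⟨hp₀, hp₁⟩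
    ⟨hp₀, hp₁⟩, card_singleton, pow_one]
  exact mul_le_mul_of_nonneg_left (pow_le_pow_of_le_one (by linarith) (by linarith)
    (card_blockingFacets_le hjk (mem_powersetCard_univ.1 hK) hcard hcK)) hp₀

lemma uniformCube_real_forall_notMem_birthBox_le {c : Finset V → Finset V}
    (hc : ∀ K, #K = k + 1 → c K ⊆ K ∧ #(c K) = j) (hjk : j < k) (hp₀ : 0 < p) (hp₁ : p < 1)
    (hV : k + 1 ≤ Fintype.card V) :
    (uniformCube (Finset V)).real {t | ∀ K ∈ univ.powersetCard (k + 1),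
        t ∉ birthBox {K} (blockingFacets k K (c K)) p p} ≤
      ((Fintype.card V).choose (k + 1) *
        (p * (1 - p) ^ ((k - j + 1) * (Fintype.card V).choose (k - j))))⁻¹ +
      (((1 - p) ^ ((k + 1) * (k + 1) * Fintype.card V ^ (k - j - 1)))⁻¹ - 1) := by
  have hq : 0 < 1 - p := sub_pos.2 hp₁
  have hmean := le_sum_uniformCube_real_birthBox hc hjk.le hp₀.le hp₁.le
  have hmean₀ : 0 < ((Fintype.card V).choose (k + 1) : ℝ) *
      (p * (1 - p) ^ ((k - j + 1) * (Fintype.card V).choose (k - j))) := by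
    have := Nat.choose_pos hV
    positivity
  have hQ : 1 ≤ ((1 - p) ^ ((k + 1) * (k + 1) * Fintype.card V ^ (k - j - 1)))⁻¹ :=
    (one_le_inv₀ (by positivity)).2 (pow_le_one₀ hq.le (by linarith))
  have hmeas : ∀ K ∈ univ.powersetCard (k + 1),
      MeasurableSet (birthBox {K} (blockingFacets k K (c K)) p p) := fun K _ ↦
    measurableSet_birthBox (disjoint_singleton_left.2 notMem_blockingFacets_self) p p
  refine (measureReal_forall_notMem_le hmeas hQ (fun K hK K' hK' hne ↦ ?_)
    (hmean₀.trans_le hmean)).trans (add_le_add_left (inv_anti₀ hmean₀ hmean) _)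
  rw [mem_powersetCard_univ] at hK hK'
  refine uniformCube_real_birthBox_inter_le notMem_blockingFacets_self
    notMem_blockingFacets_self hne hp₀.le hp₁ fun h _ ↦ ?_
  exact card_blockingFacets_inter_le hjk hK hK' (hc K' hK').2 (hc K' hK').1 hne.symm h

lemma uniformCube_real_not_exists_isMjMinus_le [DecidableEq V] {G : (Finset V → ℝ) → Set (Finset V)}
    (hG : ∀ t, IsRelLowerSet (G t) Finset.Nonempty)
    (hGt : ∀ t L, IsSimplex (G t) k L ↔ #L = k + 1 ∧ t L ≤ p) (hj : 1 ≤ j) (hjk : j < k)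
    (hp₀ : 0 < p) (hp₁ : p < 1) (hV : k + 1 ≤ Fintype.card V) :
    (uniformCube (Finset V)).real {t | ¬ ∃ K C, IsMjMinus (G t) k j K C} ≤
      ((Fintype.card V).choose (k + 1) *
        (p * (1 - p) ^ ((k - j + 1) * (Fintype.card V).choose (k - j))))⁻¹ +
      (((1 - p) ^ ((k + 1) * (k + 1) * Fintype.card V ^ (k - j - 1)))⁻¹ - 1) := by
  obtain rfl := Subsingleton.elim ‹DecidableEq V› fun _ _ ↦ Classical.propDecidable _
  have hcenter : ∀ K : Finset V, ∃ C, #K = k + 1 → C ⊆ K ∧ #C = j := by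
    intro K
    by_cases hK : #K = k + 1
    · exact (exists_subset_card_eq (show j ≤ #K by lia)).imp fun _ hC _ ↦ hC
    · exact ⟨∅, fun h ↦ absurd h hK⟩
  choose c hc using hcenter
  have hsub : {t | ¬ ∃ K C, IsMjMinus (G t) k j K C} ⊆ {t | ∀ K ∈ univ.powersetCard (k + 1),
      t ∉ birthBox {K} (blockingFacets k K (c K)) p p} := by
    refine fun t ht K hK hKt ↦ ht ⟨K, c K, ?_⟩
    rw [mem_powersetCard_univ] at hK
    exact isMjMinus_of_mem_birthBox (hG t) (hGt t) hK hj (hc K hK).2 (hc K hK).1 hKt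
  exact (measureReal_mono hsub (measure_ne_top _ _)).trans
    (uniformCube_real_forall_notMem_birthBox_le hc hjk hp₀ hp₁ hV)

end BlockingFacets

section SecondMomentAsymptotics

open Finset

lemma exp_neg_mul_le_one_sub_pow {a p : ℝ} (hp : 0 ≤ p) (ha₀ : 0 ≤ a) (ha : 1 ≤ a * (1 - p))
    (m : ℕ) : Real.exp (-(a * (p * m))) ≤ (1 - p) ^ m := by
  have hexp : 1 ≤ (1 - p) * Real.exp (a * p) := by
    have hq : 0 < 1 - p := pos_of_mul_pos_right (one_pos.trans_le ha) ha₀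
    calc 1 ≤ (1 - p) * (a * p + 1) := by nlinarith
      _ ≤ (1 - p) * Real.exp (a * p) := by gcongr; exact Real.add_one_le_exp _
  calc Real.exp (-(a * (p * m))) = Real.exp (-(a * p)) ^ m := by
        rw [← Real.exp_nat_mul]
        ring_nf
    _ ≤ (1 - p) ^ m := by
        gcongr
        rwa [Real.exp_neg, inv_le_iff_one_le_mul₀ (Real.exp_pos _)]

variable {d j k : ℕ} {b : ℝ}

lemma tendsto_one_sub_scaledTime_pow (hd : d ≠ 0) (hb : 0 ≤ b) (c : ℕ) :
    Tendsto (fun n : ℕ ↦ (1 - scaledTime d b n) ^ (c * n ^ (d - 1))) atTop (nhds 1) := by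
  have hlower := ((tendsto_log_pow_mul_rpow_neg 1 one_pos).const_mul
    (-(c * (b * d.factorial)))).const_add 1
  rw [mul_zero, add_zero] at hlower
  refine tendsto_of_tendsto_of_tendsto_of_le_of_le' hlower tendsto_const_nhds ?_ ?_ <;>
    filter_upwards [eventually_scaledTime_mem_Icc hd hb, eventually_ne_atTop 0] with n hp hn
  · have hcount : scaledTime d b n * ((c * n ^ (d - 1) : ℕ) : ℝ) =
        c * (b * d.factorial) * (Real.log n ^ 1 * (n : ℝ) ^ (-1 : ℝ)) := by
      have hpow : (n : ℝ) ^ d = n ^ (d - 1) * n := by rw [← pow_succ, Nat.sub_add_cancel (by lia)]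
      rw [scaledTime, hpow, Real.rpow_neg_one]
      push_cast
      field_simp
    calc _ = 1 + ((c * n ^ (d - 1) : ℕ) : ℝ) * -scaledTime d b n := by linarith
      _ ≤ (1 + -scaledTime d b n) ^ (c * n ^ (d - 1)) :=
          one_add_mul_le_pow (by linarith [hp.2]) _
      _ = _ := by rw [← sub_eq_add_neg]
  · exact pow_le_one₀ (by linarith [hp.2]) (by linarith [hp.1])

lemma scaledTime_mul_choose_le (hb : 0 ≤ b) {n : ℕ} (hn : n ≠ 0) :
    scaledTime d b n * n.choose d ≤ b * Real.log n := by
  have := scaledTime_nonneg (d := d) (n := n) hb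
  calc scaledTime d b n * n.choose d ≤ scaledTime d b n * (n ^ d / d.factorial) := by
        gcongr
        exact Nat.choose_le_pow_div d n
    _ = b * Real.log n := by
        rw [← mul_div_assoc, scaledTime_mul_pow hn]
        field_simp

lemma eventually_rpow_neg_le_one_sub_scaledTime_pow (hd : d ≠ 0) (hb : 0 < b) {r : ℝ} {m : ℕ}
    (hm : m ≠ 0) (hr : b * m < r) :
    ∀ᶠ n : ℕ in atTop, (n : ℝ) ^ (-r) ≤ (1 - scaledTime d b n) ^ (m * n.choose d) := by
  have hbm : 0 < b * m := mul_pos hb (Nat.cast_pos.2 hm.bot_lt)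
  let a := r / (b * m)
  have ha : 1 < a := (one_lt_div hbm).2 hr
  have hlim := ((tendsto_scaledTime hd b).const_sub 1).const_mul a
  rw [sub_zero, mul_one] at hlim
  filter_upwards [hlim.eventually (lt_mem_nhds ha), eventually_ne_atTop 0] with n hap hn
  have hexponent : a * (scaledTime d b n * (m * n.choose d : ℕ)) ≤ r * Real.log n := by
    calc a * (scaledTime d b n * (m * n.choose d : ℕ))
        = a * m * (scaledTime d b n * n.choose d) := by push_cast; ring
      _ ≤ a * m * (b * Real.log n) :=
          mul_le_mul_of_nonneg_left (scaledTime_mul_choose_le hb.le hn) (by positivity)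
      _ = a * (b * m) * Real.log n := by ring
      _ = r * Real.log n := by rw [div_mul_cancel₀ _ hbm.ne']
  calc (n : ℝ) ^ (-r) = Real.exp (-(r * Real.log n)) :=
        (exp_neg_mul_log (Nat.cast_pos.2 hn.bot_lt) r).symm
    _ ≤ Real.exp (-(a * (scaledTime d b n * (m * n.choose d : ℕ)))) := by gcongr
    _ ≤ (1 - scaledTime d b n) ^ (m * n.choose d) :=
        exp_neg_mul_le_one_sub_pow (scaledTime_nonneg hb.le) (one_pos.trans ha).le hap.le _

lemma tendsto_choose_mul_scaledTime_mul_pow (hjk : j < k) (hb : 0 < b)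
    (hbj : b * (k - j + 1 : ℕ) < j + 1) :
    Tendsto (fun n : ℕ ↦ (n.choose (k + 1) : ℝ) * (scaledTime (k - j) b n *
      (1 - scaledTime (k - j) b n) ^ ((k - j + 1) * n.choose (k - j)))) atTop atTop := by
  obtain ⟨r, hbr, hrj⟩ := exists_between hbj
  let c : ℝ := 1 / 2 / (k + 1).factorial * (b * (k - j).factorial)
  have hc : 0 < c := by positivity
  refine tendsto_atTop_mono' _ ?_ ((tendsto_log_natCast_atTop.const_mul_atTop hc).atTop_mul_atTop₀
    ((tendsto_rpow_atTop (sub_pos.2 hrj)).comp tendsto_natCast_atTop_atTop))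
  filter_upwards [eventually_mul_pow_le_factorial_mul_choose 0 (k + 1)
    (show (1 / 2 : ℝ) < 1 by norm_num), eventually_ne_atTop 0,
    eventually_rpow_neg_le_one_sub_scaledTime_pow (by lia : k - j ≠ 0) hb (by lia) hbr]
    with n hchoose hn hblock
  have hfacets : 1 / 2 / (k + 1).factorial * (n : ℝ) ^ (k + 1) ≤ n.choose (k + 1) := by
    rw [div_mul_eq_mul_div, div_le_iff₀' (by positivity)]
    exact hchoose
  have hpow : (n : ℝ) ^ (k + 1) = n ^ (k - j) * n ^ (j + 1) := by
    rw [← pow_add]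
    congr 1
    lia
  have hsplit := rpow_neg_sub_natCast (Nat.cast_pos.2 hn.bot_lt : (0 : ℝ) < n) r (j + 1)
  push_cast at hsplit
  have := scaledTime_nonneg (d := k - j) (n := n) hb.le
  calc c * Real.log n * (n : ℝ) ^ ((j : ℝ) + 1 - r)
      = 1 / 2 / (k + 1).factorial * (b * (k - j).factorial * Real.log n) *
          (n ^ (j + 1) * (n : ℝ) ^ (-r)) := by
        rw [← neg_sub, hsplit]
        ring
    _ = 1 / 2 / (k + 1).factorial * n ^ (k + 1) * (scaledTime (k - j) b n * (n : ℝ) ^ (-r)) := by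
        rw [← scaledTime_mul_pow hn, hpow]
        ring
    _ ≤ n.choose (k + 1) * (scaledTime (k - j) b n *
          (1 - scaledTime (k - j) b n) ^ ((k - j + 1) * n.choose (k - j))) := by gcongr

lemma whp_exists_isMjMinus (hj : 1 ≤ j) (hjk : j < k) (hb : 0 < b)
    (hbj : b * (k - j + 1 : ℕ) < j + 1) :
    Whp fun n t ↦ ∃ K C, IsMjMinus (complexAt k n t (scaledTime (k - j) b n)) k j K C := by
  have hd : k - j ≠ 0 := by lia
  have hlim := (tendsto_choose_mul_scaledTime_mul_pow hjk hb hbj).inv_tendsto_atTop.add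
    (((tendsto_one_sub_scaledTime_pow hd hb.le ((k + 1) * (k + 1))).inv₀ one_ne_zero).sub_const 1)
  rw [inv_one, sub_self, add_zero] at hlim
  refine .of_le hlim ?_
  filter_upwards [eventually_scaledTime_lt_one hd b, eventually_ge_atTop (k + 1)] with n hp hn
  have hp₀ : 0 < scaledTime (k - j) b n := by
    have : 0 < Real.log n := Real.log_pos (by exact_mod_cast (by lia : 1 < n))
    have : 0 < n := by lia
    unfold scaledTime
    positivity
  have hbound := uniformCube_real_not_exists_isMjMinus_le (V := Fin n)
    (G := fun t ↦ complexAt k n t (scaledTime (k - j) b n))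
    (fun t ↦ isPure_complexAt.isRelLowerSet)
    (fun t L ↦ isSimplex_complexAt_iff (by lia)) hj hjk hp₀ hp (by rwa [Fintype.card_fin])
  rw [Fintype.card_fin] at hbound
  exact hbound

end SecondMomentAsymptotics

section Connectedness

open Finset

/-! ### Cohomological connectedness -/

lemma ReducedCohomologyVanishes.mono {G G' : Set (Finset V)} {j : ℕ} (hGG' : G ⊆ G')
    (hG : ∀ σ : Finset V, #σ = j + 1 → σ ∈ G) (h : ReducedCohomologyVanishes G j) :
    ReducedCohomologyVanishes G' j := fun F hF ↦
  (h F fun R hR ↦ hF R (hGG' hR)).imp fun _ hg σ _ hσ ↦ hg σ (hG σ hσ) hσ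

lemma IsNearlyComplete.exists_isMj_of_not_reducedCohomologyVanishes [Fintype V] [DecidableEq V]
    {G : Set (Finset V)} {j k m : ℕ} (h : IsNearlyComplete G j m) (hG : IsPure G k) (hj : 1 ≤ j)
    (hjk : j < k) (hV : (j + 1) * m + (k + 1) < Fintype.card V)
    (hcard : ∀ S, IsMinimalObstruction G j S → #S < k - j + 2)
    (hvan : ¬ ReducedCohomologyVanishes G j) : ∃ K C J, IsMj G k j K C J := by
  obtain ⟨S, hS⟩ := exists_isMinimalObstruction hG.isRelLowerSet hvan
  obtain ⟨K, C, hM⟩ := hS.exists_isMjMinus hG hj hjk hS.nonempty (Nat.lt_succ_iff.1 (hcard S hS))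
  exact ⟨K, C, h.exists_isMj hG.isRelLowerSet hjk.le hV hM⟩

variable {n k j : ℕ} {b : ℝ}

lemma cohomConnected_complexAt_of_pMj_le {m : ℕ} {t : Finset (Fin n) → ℝ} {p₀ p₁ p : ℝ}
    (hj : 1 ≤ j) (hjk : j < k) (hn : (j + 1) * m + (k + 1) < n) (hp₀ : 0 ≤ p₀) (hp₁ : p₁ < 1)
    (hp₀₁ : p₀ ≤ p₁) (hnear : IsNearlyComplete (complexAt k n t p₀) j m)
    (hM : ∃ K C, IsMjMinus (complexAt k n t p₀) k j K C)
    (hcard : ∀ q ∈ Set.Icc p₀ p₁, ∀ S, IsMinimalObstruction (complexAt k n t q) j S →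
      #S < k - j + 2)
    (hvan : ∀ q, p₁ ≤ q → ReducedCohomologyVanishes (complexAt k n t q) j)
    (hp : pMj k j n t ≤ p) : CohomConnected (complexAt k n t p) j := by
  have hV : (j + 1) * m + (k + 1) < Fintype.card (Fin n) := by rwa [Fintype.card_fin]
  have : Nonempty (Fin n) := Fintype.card_pos_iff.1 (by lia)
  have hp₀p : p₀ ≤ p := by
    obtain ⟨K, C, hM⟩ := hM
    obtain ⟨J, hJ⟩ := hnear.exists_isMj isPure_complexAt.isRelLowerSet hjk.le hV hM
    exact (le_pMj ⟨hp₀, hp₀₁.trans hp₁.le⟩ hJ).trans hp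
  have hnear_p := hnear.mono (complexAt_mono hp₀p)
  have hvan_p : ReducedCohomologyVanishes (complexAt k n t p) j := by
    obtain hpp₁ | hp₁p := le_total p p₁
    · by_contra hne
      obtain ⟨K, C, J, hJ⟩ := hnear_p.exists_isMj_of_not_reducedCohomologyVanishes
        isPure_complexAt hj hjk hV (hcard p ⟨hp₀p, hpp₁⟩) hne
      exact hp.not_gt (lt_pMj (hp₀.trans hp₀p) (hpp₁.trans_lt hp₁) hJ)
    · exact hvan p hp₁p
  refine cohomConnected_of_reducedCohomologyVanishes isPure_complexAt.isRelLowerSet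
    singleton_mem_complexAt fun i hi ↦ ?_
  rcases hi.lt_or_eq with hij | rfl
  · exact hnear_p.reducedCohomologyVanishes isPure_complexAt.isRelLowerSet (by lia) hij
  · exact hvan_p

lemma whp_forall_ge_reducedCohomologyVanishes (hj : 1 ≤ j) (hjk : j < k) (hb : (j : ℝ) + 1 < b) :
    Whp fun n t ↦ ∀ p, scaledTime (k - j) b n ≤ p →
      ReducedCohomologyVanishes (complexAt k n t p) j := by
  have hb₀ : 0 < b := by linarith [(Nat.cast_nonneg j : (0 : ℝ) ≤ j)]
  have hempty := whp_card_lt_of_isMinimalObstruction hj hjk hb₀ hb₀ (s := 1) (by simpa)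
  refine (hempty.and (whp_forall_mem_complexAt hj hjk hb)).mono
    (.of_forall fun n t ⟨hcard, hfull⟩ p hp ↦ ?_)
  refine .mono (complexAt_mono hp) hfull (by_contra fun hne ↦ ?_)
  obtain ⟨S, hS⟩ := exists_isMinimalObstruction isPure_complexAt.isRelLowerSet hne
  exact (hcard _ ⟨le_rfl, le_rfl⟩ S hS).not_ge (card_pos.2 hS.nonempty)

lemma eventually_mul_div_add_lt (j k : ℕ) :
    ∀ᶠ n : ℕ in atTop, (j + 1) * (n / (j + 2)) + (k + 1) < n := by
  filter_upwards [eventually_ge_atTop ((j + 2) * (k + 2))] with n hn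
  have hquot : k + 2 ≤ n / (j + 2) := (Nat.le_div_iff_mul_le (by lia)).2 (by lia)
  calc (j + 1) * (n / (j + 2)) + (k + 1) < (j + 1) * (n / (j + 2)) + n / (j + 2) := by lia
    _ = (j + 2) * (n / (j + 2)) := by ring
    _ ≤ n := Nat.mul_div_le n (j + 2)

lemma exists_between_div_succ {x : ℝ} (hx : 0 < x) (d : ℕ) :
    ∃ b, 0 < b ∧ b ≤ x ∧ b * (d + 1 : ℕ) < x ∧ x < b * (d + 2 : ℕ) := by
  obtain ⟨b, hlower, hupper⟩ := exists_between
    (show x / (d + 2 : ℕ) < x / (d + 1 : ℕ) by gcongr; lia)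
  refine ⟨b, (by positivity : 0 < x / (d + 2 : ℕ)).trans hlower,
    hupper.le.trans (div_le_self hx.le ?_), ?_, ?_⟩
  · exact_mod_cast d.succ_pos
  · rwa [lt_div_iff₀ (by positivity)] at hupper
  · rwa [div_lt_iff₀ (by positivity)] at hlower

end Connectedness

/-- Theorem 1.5(iii): whp, for all `p ≥ p_{M_j}` simultaneously, `G_p` is
`F₂`-cohomologically `j`-connected. -/
theorem statement2 (k j : ℕ) (hk : 2 ≤ k) (hj : 1 ≤ j) (hjk : j < k) :
    Tendsto (fun n : ℕ => birthMeasure n {t : Finset (Fin n) → ℝ |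
      ∀ p : ℝ, pMj k j n t ≤ p → CohomConnected (complexAt k n t p) j})
      atTop (nhds 1) := by
  obtain ⟨b, hb, hbj, hb_lt, hlt_b⟩ :=
    exists_between_div_succ (by positivity : (0 : ℝ) < j + 1) (k - j)
  obtain ⟨b₁, hjb₁⟩ := exists_gt ((j : ℝ) + 1)
  have hbb₁ : b < b₁ := hbj.trans_lt hjb₁
  have hwhp := (whp_isNearlyComplete hj hjk hb).and <|
    (whp_exists_isMjMinus hj hjk hb hb_lt).and <|
    (whp_card_lt_of_isMinimalObstruction hj hjk hb (hb.trans hbb₁) hlt_b).and <|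
    whp_forall_ge_reducedCohomologyVanishes hj hjk hjb₁
  refine (hwhp.mono ?_).tendsto_birthMeasure
  filter_upwards [eventually_mul_div_add_lt j k,
    eventually_scaledTime_lt_one (by lia : k - j ≠ 0) b₁]
    with n hn hp₁ t ⟨hnear, hM, hcard, hvan⟩ p hp
  exact cohomConnected_complexAt_of_pMj_le hj hjk hn (scaledTime_nonneg hb.le) hp₁
    (scaledTime_mono hbb₁.le) hnear hM hcard hvan hp

end RSC
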